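/- arXiv:math/0002163 — 4 statements merged into one kernel-verified Lean document; each statement's English description precedes it below -/
import Mathlib

section
/- Let U ⊆ ℂⁿ be open, y⁰ ∈ U, and consider the homogeneous linear PDE system (R_q) of order q: ∑_{j=1}^m ∑_{|α| ≤ q} a^i_{jα}(y) ∂^α τ^j = 0 for i = 1,…,s, with coefficients a^i_{jα} analytic on U, for an unknown map τ = (τ¹,…,τ^m). Suppose there exists r ≥ 0 such that the symbol of the r-prolongation of (R_q) at y⁰ is trivial, i.e. the only family v = (v^j_γ) of complex numbers, indexed by j = 1,…,m and multi-indices γ with |γ| = q + r, satisfying ∑_{j=1}^m ∑_{|α| = q} a^i_{jα}(y⁰) v^j_{β+α} = 0 for every i = 1,…,s and every multi-index β with |β| = r, is v = 0. Then for every connected open set V with y⁰ ∈ V ⊆ U, the ℂ-vector space of analytic solutions τ : V → ℂ^m of (R_q) is finite dimensional; moreover its dimension is at most m times the number of multi-indices of degree ≤ q + r − 1 in n variables. -/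
/-!
A solution `τ` on `V` is determined by its derivatives of order `< q + r` at `y⁰`, so the solutions
restricted to `V` form a space of dimension at most `m · #{γ : |γ| < q + r}`.

Suppose these derivatives vanish. Then all derivatives `∂^γ τ^j (y⁰)` vanish, by induction on
`N = |γ|`. Let `N ≥ q + r` and split `γ = γ' + δ` with `|γ'| = q + r`. Applying `∂^(β + δ)` with
`|β| = r` to the equations and evaluating at `y⁰`, only the principal part survives, as all
derivatives of order `< N` vanish there: `∑_j ∑_{|α| = q} a^i_{jα}(y⁰) ∂^(β + α + δ) τ^j (y⁰) = 0`.
Thus the family `v^j_ε = ∂^(ε + δ) τ^j (y⁰)` with `|ε| = q + r` lies in the symbol of the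
`r`-prolongation and is zero. The identity theorem on the connected set `V` gives `τ = 0`.

The Leibniz rule is obtained from that for Fréchet derivatives, since `∂^α` is the iterated Fréchet
derivative evaluated on coordinate vectors.
-/

/-- The partial derivative of `f : ℂⁿ → ℂ` in the `i`-th coordinate direction. -/
noncomputable def pdi {n : ℕ} (i : Fin n) (f : (Fin n → ℂ) → ℂ) : (Fin n → ℂ) → ℂ :=
  fun y => fderiv ℂ f y (Pi.single i 1)

/-- The iterated partial derivative `∂^α f` of `f : ℂⁿ → ℂ` associated with the
multi-index `α : Fin n → ℕ` (the `i`-th coordinate derivative taken `α i` times). -/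
noncomputable def mpd {n : ℕ} (α : Fin n → ℕ) (f : (Fin n → ℂ) → ℂ) : (Fin n → ℂ) → ℂ :=
  (List.finRange n).foldr (fun i g => (pdi i)^[α i] g) f

/-- The finite set of multi-indices in `n` variables of total degree `≤ d`. -/
def degLe (n d : ℕ) : Finset (Fin n → ℕ) :=
  (Finset.Iic (fun _ => d)).filter (fun α => ∑ i, α i ≤ d)

/-- The finite set of multi-indices in `n` variables of total degree `= d`. -/
def degEq (n d : ℕ) : Finset (Fin n → ℕ) :=
  (Finset.Iic (fun _ => d)).filter (fun α => ∑ i, α i = d)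

/-- The finite set of multi-indices in `n` variables of total degree `< d`. -/
def degLt (n d : ℕ) : Finset (Fin n → ℕ) :=
  (Finset.Iic (fun _ => d)).filter (fun α => ∑ i, α i < d)

open Filter Topology

namespace FiniteType

/-! ### Iterated derivatives and vanishing -/

section IteratedFDeriv

variable {𝕜 E F : Type*} [NontriviallyNormedField 𝕜] [NormedAddCommGroup E] [NormedSpace 𝕜 E]
  [NormedAddCommGroup F] [NormedSpace 𝕜 F] {x : E}

lemma norm_iteratedFDeriv_smul_le_of_contDiffAt {k : ℕ} {c : E → 𝕜} {f : E → F}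
    (hc : ContDiffAt 𝕜 k c x) (hf : ContDiffAt 𝕜 k f x) :
    ‖iteratedFDeriv 𝕜 k (fun z => c z • f z) x‖ ≤
      ∑ i ∈ Finset.range (k + 1), (k.choose i : ℝ) * ‖iteratedFDeriv 𝕜 i c x‖ *
        ‖iteratedFDeriv 𝕜 (k - i) f x‖ := by
  obtain ⟨u, hu, hcu⟩ := hc.contDiffOn le_rfl (by simp)
  obtain ⟨v, hv, hfv⟩ := hf.contDiffOn le_rfl (by simp)
  obtain ⟨w, hwsub, hw, hxw⟩ := mem_nhds_iff.1 (inter_mem hu hv)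
  simpa only [iteratedFDerivWithin_of_isOpen _ hw hxw] using
    norm_iteratedFDerivWithin_smul_le (hcu.mono fun z hz => (hwsub hz).1)
      (hfv.mono fun z hz => (hwsub hz).2) hw.uniqueDiffOn hxw le_rfl

/-- The Leibniz bound is applied to `(c - c x) • f`, all of whose terms vanish at `x`. -/
lemma iteratedFDeriv_smul_of_forall_lt_eq_zero {k : ℕ} {c : E → 𝕜} {f : E → F}
    (hc : ContDiffAt 𝕜 k c x) (hf : ContDiffAt 𝕜 k f x)
    (h : ∀ i < k, iteratedFDeriv 𝕜 i f x = 0) :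
    iteratedFDeriv 𝕜 k (fun z => c z • f z) x = c x • iteratedFDeriv 𝕜 k f x := by
  have hc' : ContDiffAt 𝕜 k (fun z => c z - c x) x := hc.sub contDiffAt_const
  have hsplit : (fun z => c z • f z) = fun z => (c z - c x) • f z + c x • f z := by
    ext z; rw [← add_smul, sub_add_cancel]
  have hremainder : iteratedFDeriv 𝕜 k (fun z => (c z - c x) • f z) x = 0 := by
    refine norm_le_zero_iff.1 ((norm_iteratedFDeriv_smul_le_of_contDiffAt hc' hf).trans_eq ?_)
    refine Finset.sum_eq_zero fun i hi => ?_
    rcases i.eq_zero_or_pos with rfl | hpos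
    · simp [norm_iteratedFDeriv_zero]
    · rw [h (k - i) (by have := Finset.mem_range_succ_iff.1 hi; omega), norm_zero, mul_zero]
  rw [hsplit, fun_iteratedFDeriv_add_apply (hc'.fun_smul hf) (contDiffAt_const.fun_smul hf),
    hremainder, zero_add, iteratedFDeriv_const_smul_apply' hf]

lemma eventuallyEq_zero_of_iteratedFDeriv_eq_zero [CharZero 𝕜] [CompleteSpace F] {f : E → F}
    (hf : AnalyticAt 𝕜 f x) (h : ∀ k, iteratedFDeriv 𝕜 k f x = 0) : f =ᶠ[𝓝 x] 0 := by
  obtain ⟨p, ρ, hp⟩ := hf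
  filter_upwards [Metric.eball_mem_nhds x hp.r_pos] with z hz
  have hsum := hp.hasSum_iteratedFDeriv (y := z - x) (by simpa [edist_eq_enorm_sub] using hz)
  simp only [h, add_sub_cancel] at hsum
  simpa using hsum.unique (by simp)

end IteratedFDeriv

/-! ### Multi-indices -/

section MultiIndex

variable {σ : Type*}

lemma multiIndex_induction [Finite σ] [DecidableEq σ] {P : (σ → ℕ) → Prop} (zero : P 0)
    (single_add : ∀ i α, P α → P (Pi.single i 1 + α)) (α : σ → ℕ) : P α := by
  suffices h : ∀ β, P β → P (α + β) by simpa using h 0 zero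
  induction α using Pi.single_induction with
  | zero => simp
  | add α α' h h' => exact fun β hβ => by simpa [add_assoc] using h _ (h' β hβ)
  | single i k =>
    intro β hβ
    induction k with
    | zero => simpa
    | succ k ih => simpa [add_comm k, Pi.single_add, add_assoc] using single_add i _ ih

lemma sum_sum_single_apply [Fintype σ] [DecidableEq σ] {k : ℕ} (i : Fin k → σ) :
    ∑ l, (∑ t, Pi.single (i t) 1 : σ → ℕ) l = k := by
  simp only [Finset.sum_apply]
  rw [Finset.sum_comm]
  simp

lemma exists_sum_single_eq [Fintype σ] [DecidableEq σ] (α : σ → ℕ) :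
    ∃ i : Fin (∑ l, α l) → σ, ∑ t, Pi.single (i t) 1 = α := by
  suffices h : ∃ k, ∃ i : Fin k → σ, ∑ t, Pi.single (i t) 1 = α by
    obtain ⟨k, i, rfl⟩ := h
    rw [sum_sum_single_apply]
    exact ⟨i, rfl⟩
  induction α using multiIndex_induction with
  | zero => exact ⟨0, Fin.elim0, rfl⟩
  | single_add i α ih =>
    obtain ⟨k, i', rfl⟩ := ih
    exact ⟨k + 1, Fin.cons i i', by simp [Fin.sum_univ_succ]⟩

lemma exists_add_eq_of_le_sum [Fintype σ] {α : σ → ℕ} {d : ℕ} (h : d ≤ ∑ l, α l) :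
    ∃ β δ, β + δ = α ∧ ∑ l, β l = d := by
  classical
  induction α using multiIndex_induction generalizing d with
  | zero => exact ⟨0, 0, add_zero 0, le_antisymm (by simp) h⟩
  | single_add i α ih =>
    have hdeg : ∀ β : σ → ℕ, ∑ l, (Pi.single i 1 + β : σ → ℕ) l = ∑ l, β l + 1 := fun β => by
      simp [Finset.sum_add_distrib, add_comm]
    cases d with
    | zero => exact ⟨0, _, zero_add _, by simp⟩
    | succ d =>
      obtain ⟨β, δ, rfl, hβ⟩ := ih (Nat.le_of_succ_le_succ (h.trans_eq (hdeg α)))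
      exact ⟨Pi.single i 1 + β, δ, add_assoc _ _ _, by rw [hdeg, hβ]⟩

end MultiIndex

variable {n : ℕ} {f g : (Fin n → ℂ) → ℂ} {y : Fin n → ℂ}

lemma mem_Iic_of_sum_le {α : Fin n → ℕ} {d : ℕ} (h : ∑ i, α i ≤ d) :
    α ∈ Finset.Iic (fun _ : Fin n => d) :=
  Finset.mem_Iic.2 fun i => (Finset.single_le_sum_of_canonicallyOrdered (Finset.mem_univ i)).trans h

lemma mem_degLe {α : Fin n → ℕ} {d : ℕ} : α ∈ degLe n d ↔ ∑ i, α i ≤ d := by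
  rw [degLe, Finset.mem_filter, and_iff_right_of_imp mem_Iic_of_sum_le]

lemma mem_degEq {α : Fin n → ℕ} {d : ℕ} : α ∈ degEq n d ↔ ∑ i, α i = d := by
  rw [degEq, Finset.mem_filter, and_iff_right_of_imp fun h => mem_Iic_of_sum_le h.le]

lemma mem_degLt {α : Fin n → ℕ} {d : ℕ} : α ∈ degLt n d ↔ ∑ i, α i < d := by
  rw [degLt, Finset.mem_filter, and_iff_right_of_imp fun h => mem_Iic_of_sum_le h.le]

/-! ### Partial derivatives of analytic functions -/

lemma analyticAt_pdi (i : Fin n) (hf : AnalyticAt ℂ f y) : AnalyticAt ℂ (pdi i f) y :=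
  ((ContinuousLinearMap.apply ℂ ℂ (Pi.single i 1 : Fin n → ℂ)).analyticAt _).comp hf.fderiv

lemma pdi_congr (i : Fin n) (h : f =ᶠ[𝓝 y] g) : pdi i f =ᶠ[𝓝 y] pdi i g :=
  (h.fderiv (𝕜 := ℂ)).mono fun _ hz => congrArg (· (Pi.single i 1)) hz

lemma pdi_pdi_apply (i j : Fin n) (hf : AnalyticAt ℂ f y) :
    pdi i (pdi j f) y = fderiv ℂ (fderiv ℂ f) y (Pi.single i 1) (Pi.single j 1) := by
  unfold pdi
  rw [fderiv_clm_apply hf.fderiv.differentiableAt (differentiableAt_const _)]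
  simp

lemma pdi_comm (i j : Fin n) (hf : AnalyticAt ℂ f y) :
    pdi i (pdi j f) =ᶠ[𝓝 y] pdi j (pdi i f) := by
  filter_upwards [hf.eventually_analyticAt] with z hz
  rw [pdi_pdi_apply i j hz, pdi_pdi_apply j i hz]
  exact (ContDiffAt.isSymmSndFDerivAt_of_omega hz.contDiffAt) _ _

lemma analyticAt_iterate_pdi (i : Fin n) (k : ℕ) (hf : AnalyticAt ℂ f y) :
    AnalyticAt ℂ ((pdi i)^[k] f) y :=
  Function.Iterate.rec (AnalyticAt ℂ · y) hf (fun _ => analyticAt_pdi i) k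

lemma iterate_pdi_congr (i : Fin n) (k : ℕ) (h : f =ᶠ[𝓝 y] g) :
    (pdi i)^[k] f =ᶠ[𝓝 y] (pdi i)^[k] g := by
  induction k generalizing f g with
  | zero => exact h
  | succ _ ih => exact ih (pdi_congr i h)

lemma iterate_pdi_pdi_comm (i j : Fin n) (k : ℕ) (hf : AnalyticAt ℂ f y) :
    (pdi j)^[k] (pdi i f) =ᶠ[𝓝 y] pdi i ((pdi j)^[k] f) := by
  induction k generalizing f with
  | zero => rfl
  | succ k ih => exact (iterate_pdi_congr j k (pdi_comm j i hf)).trans (ih (analyticAt_pdi j hf))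

lemma analyticAt_foldr_pdi (α : Fin n → ℕ) (L : List (Fin n)) (hf : AnalyticAt ℂ f y) :
    AnalyticAt ℂ (L.foldr (fun i g => (pdi i)^[α i] g) f) y := by
  induction L with
  | nil => exact hf
  | cons k L ih => exact analyticAt_iterate_pdi k _ ih

lemma analyticAt_mpd (α : Fin n → ℕ) (hf : AnalyticAt ℂ f y) : AnalyticAt ℂ (mpd α f) y :=
  analyticAt_foldr_pdi α _ hf

lemma foldr_pdi_single_add (i : Fin n) (α : Fin n → ℕ) {L : List (Fin n)} (hL : L.Nodup)
    (hi : i ∈ L) (hf : AnalyticAt ℂ f y) :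
    L.foldr (fun k g => (pdi k)^[(Pi.single i 1 + α : Fin n → ℕ) k] g) f =ᶠ[𝓝 y]
      pdi i (L.foldr (fun k g => (pdi k)^[α k] g) f) := by
  induction L with
  | nil => simp at hi
  | cons k L ih =>
    obtain ⟨hkL, hL⟩ := List.nodup_cons.1 hL
    rcases eq_or_ne k i with rfl | hki
    · have htail : L.foldr (fun l g => (pdi l)^[(Pi.single k 1 + α : Fin n → ℕ) l] g) f =
          L.foldr (fun l g => (pdi l)^[α l] g) f :=
        List.foldr_ext _ _ _ fun l hl g => by
          simp [Pi.single_eq_of_ne (ne_of_mem_of_not_mem hl hkL)]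
      rw [List.foldr_cons, htail, Pi.add_apply, Pi.single_eq_same, add_comm,
        Function.iterate_succ_apply', List.foldr_cons]
    · simp only [List.foldr_cons, Pi.add_apply, Pi.single_eq_of_ne hki, zero_add]
      exact (iterate_pdi_congr k _ (ih hL ((List.mem_cons.1 hi).resolve_left hki.symm))).trans
        (iterate_pdi_pdi_comm i k _ (analyticAt_foldr_pdi α L hf))

lemma mpd_single_add (i : Fin n) (α : Fin n → ℕ) (hf : AnalyticAt ℂ f y) :
    mpd (Pi.single i 1 + α) f =ᶠ[𝓝 y] pdi i (mpd α f) :=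
  foldr_pdi_single_add i α (List.nodup_finRange n) (List.mem_finRange i) hf

lemma mpd_zero_index (f : (Fin n → ℂ) → ℂ) : mpd 0 f = f := by
  simp [mpd]

lemma mpd_add_index (β α : Fin n → ℕ) (hf : AnalyticAt ℂ f y) :
    mpd (β + α) f =ᶠ[𝓝 y] mpd β (mpd α f) := by
  induction β using multiIndex_induction with
  | zero => rw [zero_add, mpd_zero_index]
  | single_add i β ih =>
    rw [add_assoc]
    exact (mpd_single_add i _ hf).trans
      ((pdi_congr i ih).trans (mpd_single_add i β (analyticAt_mpd α hf)).symm)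

lemma iteratedFDeriv_apply_single {k : ℕ} (i : Fin k → Fin n) (hf : AnalyticAt ℂ f y) :
    iteratedFDeriv ℂ k f y (fun t => Pi.single (i t) 1) = mpd (∑ t, Pi.single (i t) 1) f y := by
  induction k generalizing y with
  | zero => simp [mpd_zero_index]
  | succ k ih =>
    have hdiff : DifferentiableAt ℂ (iteratedFDeriv ℂ k f) y :=
      (hf.contDiffAt (n := ⊤)).differentiableAt_iteratedFDeriv (by simp)
    have htail : (fun z => iteratedFDeriv ℂ k f z (fun t => Pi.single (i t.succ) 1)) =ᶠ[𝓝 y]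
        mpd (∑ t : Fin k, Pi.single (i t.succ) 1) f :=
      hf.eventually_analyticAt.mono fun z hz => ih (fun t => i t.succ) hz
    rw [Fin.sum_univ_succ, (mpd_single_add _ _ hf).eq_of_nhds, pdi, ← htail.fderiv_eq,
      hdiff.iteratedFDeriv_succ_apply_left']
    rfl

lemma exists_mpd_eq_iteratedFDeriv (α : Fin n → ℕ) :
    ∃ v : Fin (∑ l, α l) → Fin n → ℂ, ∀ {f : (Fin n → ℂ) → ℂ} {y : Fin n → ℂ},
      AnalyticAt ℂ f y → mpd α f y = iteratedFDeriv ℂ (∑ l, α l) f y v := by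
  obtain ⟨i, hi⟩ := exists_sum_single_eq α
  exact ⟨fun t => Pi.single (i t) 1, fun hf => by rw [iteratedFDeriv_apply_single i hf, hi]⟩

lemma iteratedFDeriv_eq_zero_of_mpd_eq_zero {k : ℕ} (hf : AnalyticAt ℂ f y)
    (h : ∀ α : Fin n → ℕ, ∑ l, α l = k → mpd α f y = 0) : iteratedFDeriv ℂ k f y = 0 := by
  apply ContinuousMultilinearMap.toMultilinearMap_injective
  refine Module.Basis.ext_multilinear (fun _ => Pi.basisFun ℂ (Fin n)) fun i => ?_
  simpa [h _ (sum_sum_single_apply i)] using iteratedFDeriv_apply_single i hf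

lemma mpd_add (α : Fin n → ℕ) (hf : AnalyticAt ℂ f y) (hg : AnalyticAt ℂ g y) :
    mpd α (fun z => f z + g z) y = mpd α f y + mpd α g y := by
  obtain ⟨v, hv⟩ := exists_mpd_eq_iteratedFDeriv α
  rw [hv hf, hv hg, hv (hf.fun_add hg),
    fun_iteratedFDeriv_add_apply hf.contDiffAt hg.contDiffAt]
  rfl

lemma mpd_const_mul (α : Fin n → ℕ) (c : ℂ) (hf : AnalyticAt ℂ f y) :
    mpd α (fun z => c * f z) y = c * mpd α f y := by
  obtain ⟨v, hv⟩ := exists_mpd_eq_iteratedFDeriv α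
  rw [hv hf, hv (analyticAt_const.fun_mul hf)]
  exact congrArg (· v) (iteratedFDeriv_const_smul_apply' (a := c) (f := f) hf.contDiffAt)

lemma mpd_sum {ι : Type*} (α : Fin n → ℕ) {s : Finset ι} {F : ι → (Fin n → ℂ) → ℂ}
    (hF : ∀ k ∈ s, AnalyticAt ℂ (F k) y) :
    mpd α (fun z => ∑ k ∈ s, F k z) y = ∑ k ∈ s, mpd α (F k) y := by
  obtain ⟨v, hv⟩ := exists_mpd_eq_iteratedFDeriv α
  rw [hv (Finset.analyticAt_fun_sum s hF),
    iteratedFDeriv_fun_sum_apply fun k hk => (hF k hk).contDiffAt,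
    sum_apply]
  exact Finset.sum_congr rfl fun k hk => (hv (hF k hk)).symm

lemma mpd_eq_zero_of_eventuallyEq_zero (α : Fin n → ℕ) (h : f =ᶠ[𝓝 y] 0) : mpd α f y = 0 := by
  obtain ⟨v, hv⟩ := exists_mpd_eq_iteratedFDeriv α
  rw [hv (analyticAt_const.congr h.symm), (h.iteratedFDeriv ℂ _).eq_of_nhds]
  simp

lemma mpd_mul_of_forall_lt_eq_zero {α : Fin n → ℕ} (hg : AnalyticAt ℂ g y) (hf : AnalyticAt ℂ f y)
    (h : ∀ β : Fin n → ℕ, ∑ l, β l < ∑ l, α l → mpd β f y = 0) :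
    mpd α (fun z => g z * f z) y = g y * mpd α f y := by
  obtain ⟨v, hv⟩ := exists_mpd_eq_iteratedFDeriv α
  rw [hv hf, hv (hg.fun_mul hf)]
  exact congrArg (· v) (iteratedFDeriv_smul_of_forall_lt_eq_zero hg.contDiffAt hf.contDiffAt
    fun k hk => iteratedFDeriv_eq_zero_of_mpd_eq_zero hf fun β hβ => h β (hβ ▸ hk))

lemma eqOn_zero_of_mpd_eq_zero {V : Set (Fin n → ℂ)} (hf : AnalyticOnNhd ℂ f V)
    (hV : IsPreconnected V) (hy : y ∈ V) (h : ∀ α, mpd α f y = 0) : V.EqOn f 0 :=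
  hf.eqOn_zero_of_preconnected_of_eventuallyEq_zero hV hy <|
    eventuallyEq_zero_of_iteratedFDeriv_eq_zero (hf y hy) fun _ =>
      iteratedFDeriv_eq_zero_of_mpd_eq_zero (hf y hy) fun α _ => h α

/-! ### Linear differential operators and the symbol of a prolongation -/

section System

variable {ι κ : Type*} [Fintype κ] {q r : ℕ} {a : ι → κ → (Fin n → ℕ) → (Fin n → ℂ) → ℂ}
  {b : κ → (Fin n → ℕ) → (Fin n → ℂ) → ℂ} {τ τ' : (Fin n → ℂ) → κ → ℂ} {V : Set (Fin n → ℂ)}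

/-- The scalar linear differential operator `τ ↦ ∑_j ∑_{|α| ≤ q} b_{jα} ∂^α τ^j` of order `q`, which
is one equation of a system. -/
noncomputable def diffOp (q : ℕ) (b : κ → (Fin n → ℕ) → (Fin n → ℂ) → ℂ)
    (τ : (Fin n → ℂ) → κ → ℂ) (y : Fin n → ℂ) : ℂ :=
  ∑ j, ∑ α ∈ degLe n q, b j α y * mpd α (fun z => τ z j) y

/-- The symbol of the `r`-prolongation of a system of order `q` is the zero space, where `A` holds
the values of the coefficients at the base point. Elements of the symbol are encoded as families
over all multi-indices, of which only the entries of degree `q + r` are relevant. -/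
def HasTrivialSymbol (q r : ℕ) (A : ι → κ → (Fin n → ℕ) → ℂ) : Prop :=
  ∀ v : (Fin n → ℕ) → κ → ℂ,
    (∀ i (β : Fin n → ℕ), ∑ l, β l = r → ∑ j, ∑ α ∈ degEq n q, A i j α * v (β + α) j = 0) →
    ∀ γ : Fin n → ℕ, ∑ l, γ l = q + r → ∀ j, v γ j = 0

/-- `τ` is an analytic solution on `V` of the system of order `q` with coefficients `a`; its values
outside `V` are arbitrary. -/
def IsSolutionOn (q : ℕ) (a : ι → κ → (Fin n → ℕ) → (Fin n → ℂ) → ℂ) (V : Set (Fin n → ℂ))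
    (τ : (Fin n → ℂ) → κ → ℂ) : Prop :=
  (∀ j, AnalyticOnNhd ℂ (fun y => τ y j) V) ∧ ∀ i, ∀ y ∈ V, diffOp q (a i) τ y = 0

lemma diffOp_add (hτ : ∀ j, AnalyticAt ℂ (fun z => τ z j) y)
    (hτ' : ∀ j, AnalyticAt ℂ (fun z => τ' z j) y) :
    diffOp q b (τ + τ') y = diffOp q b τ y + diffOp q b τ' y := by
  simp only [diffOp, Pi.add_apply, mpd_add _ (hτ _) (hτ' _), mul_add, Finset.sum_add_distrib]

lemma diffOp_smul (c : ℂ) (hτ : ∀ j, AnalyticAt ℂ (fun z => τ z j) y) :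
    diffOp q b (c • τ) y = c * diffOp q b τ y := by
  simp only [diffOp, Pi.smul_apply, smul_eq_mul, mpd_const_mul _ c (hτ _), mul_left_comm _ c,
    Finset.mul_sum]

/-- Only the principal part of the operator contributes: every term in which a derivative falls on
a coefficient, or which stems from a `∂^α` with `|α| < q`, has order `< q + |β|` in `τ`. -/
lemma mpd_diffOp_of_forall_lt_eq_zero {β : Fin n → ℕ}
    (hb : ∀ j α, ∑ l, α l ≤ q → AnalyticAt ℂ (b j α) y)
    (hτ : ∀ j, AnalyticAt ℂ (fun z => τ z j) y)
    (h : ∀ γ : Fin n → ℕ, ∑ l, γ l < q + ∑ l, β l → ∀ j, mpd γ (fun z => τ z j) y = 0) :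
    mpd β (diffOp q b τ) y =
      ∑ j, ∑ α ∈ degEq n q, b j α y * mpd (β + α) (fun z => τ z j) y := by
  have hterm : ∀ j, ∀ α ∈ degLe n q,
      AnalyticAt ℂ (fun z => b j α z * mpd α (fun z => τ z j) z) y :=
    fun j α hα => (hb j α (mem_degLe.1 hα)).fun_mul (analyticAt_mpd α (hτ j))
  have hleibniz : ∀ j, ∀ α ∈ degLe n q,
      mpd β (fun z => b j α z * mpd α (fun z => τ z j) z) y =
        b j α y * mpd (β + α) (fun z => τ z j) y := by
    intro j α hα
    rw [(mpd_add_index β α (hτ j)).eq_of_nhds]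
    refine mpd_mul_of_forall_lt_eq_zero (hb j α (mem_degLe.1 hα)) (analyticAt_mpd α (hτ j))
      fun β' hβ' => ?_
    rw [← (mpd_add_index β' α (hτ j)).eq_of_nhds]
    refine h _ ?_ j
    have := mem_degLe.1 hα
    simp only [Pi.add_apply, Finset.sum_add_distrib]
    omega
  have hprincipal : ∀ j, ∑ α ∈ degLe n q, b j α y * mpd (β + α) (fun z => τ z j) y =
      ∑ α ∈ degEq n q, b j α y * mpd (β + α) (fun z => τ z j) y := by
    intro j
    refine (Finset.sum_subset (fun α hα => mem_degLe.2 (mem_degEq.1 hα).le) fun α hα hα' => ?_).symm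
    have hlt := lt_of_le_of_ne (mem_degLe.1 hα) (mt mem_degEq.2 hα')
    rw [h (β + α) (by simp only [Pi.add_apply, Finset.sum_add_distrib]; omega) j, mul_zero]
  unfold diffOp
  rw [mpd_sum β fun j _ => Finset.analyticAt_fun_sum _ (hterm j)]
  refine Finset.sum_congr rfl fun j _ => ?_
  rw [mpd_sum β (hterm j), Finset.sum_congr rfl (hleibniz j), hprincipal]

lemma mpd_eq_zero_of_hasTrivialSymbol (ha : ∀ i j α, ∑ l, α l ≤ q → AnalyticAt ℂ (a i j α) y)
    (hsymb : HasTrivialSymbol q r fun i j α => a i j α y)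
    (hτ : ∀ j, AnalyticAt ℂ (fun z => τ z j) y) (hsol : ∀ i β, mpd β (diffOp q (a i) τ) y = 0)
    (h : ∀ γ ∈ degLt n (q + r), ∀ j, mpd γ (fun z => τ z j) y = 0) (γ : Fin n → ℕ) (j : κ) :
    mpd γ (fun z => τ z j) y = 0 := by
  induction hN : ∑ l, γ l using Nat.strong_induction_on generalizing γ j with
  | _ N ih =>
    subst hN
    rcases lt_or_ge (∑ l, γ l) (q + r) with hlt | hge
    · exact h γ (mem_degLt.2 hlt) j
    obtain ⟨γ', δ, rfl, hγ'⟩ := exists_add_eq_of_le_sum hge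
    refine hsymb (fun ε j => mpd (ε + δ) (fun z => τ z j) y) (fun i β hβ => ?_) γ' hγ' j
    have hlower : ∀ ε : Fin n → ℕ, ∑ l, ε l < q + ∑ l, (β + δ) l →
        ∀ j, mpd ε (fun z => τ z j) y = 0 := by
      refine fun ε hε j => ih _ ?_ ε j rfl
      simp only [Pi.add_apply, Finset.sum_add_distrib] at hε ⊢
      omega
    simpa only [add_right_comm] using
      (mpd_diffOp_of_forall_lt_eq_zero (ha i) hτ hlower).symm.trans (hsol i (β + δ))

lemma IsSolutionOn.eqOn_zero (hτ : IsSolutionOn q a V τ) (hV : IsPreconnected V) (hy : V ∈ 𝓝 y)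
    (ha : ∀ i j α, ∑ l, α l ≤ q → AnalyticAt ℂ (a i j α) y)
    (hsymb : HasTrivialSymbol q r fun i j α => a i j α y)
    (h : ∀ γ ∈ degLt n (q + r), ∀ j, mpd γ (fun z => τ z j) y = 0) : V.EqOn τ 0 := by
  have hyV := mem_of_mem_nhds hy
  have hsol : ∀ i β, mpd β (diffOp q (a i) τ) y = 0 := fun i β =>
    mpd_eq_zero_of_eventuallyEq_zero β (eventually_of_mem hy (hτ.2 i))
  exact fun z hz => funext fun j => eqOn_zero_of_mpd_eq_zero (hτ.1 j) hV hyV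
    (fun γ => mpd_eq_zero_of_hasTrivialSymbol ha hsymb (fun j => hτ.1 j y hyV) hsol h γ j) hz

/-! ### The space of solutions and its jets -/

/-- The solutions on `V` as a subspace of all functions on `ℂⁿ`. Their values off `V` are arbitrary,
so it is the image under restriction to `V` that may be finite dimensional. -/
def solutionSpace (q : ℕ) (a : ι → κ → (Fin n → ℕ) → (Fin n → ℂ) → ℂ) (V : Set (Fin n → ℂ)) :
    Submodule ℂ ((Fin n → ℂ) → κ → ℂ) where
  carrier := {τ | IsSolutionOn q a V τ}
  zero_mem' := ⟨fun _ => analyticOnNhd_const, fun i y _ => by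
    simpa using diffOp_smul (q := q) (b := a i) (τ := 0) 0 fun _ => analyticAt_const (x := y)⟩
  add_mem' := fun hτ hτ' => ⟨fun j => (hτ.1 j).add (hτ'.1 j), fun i y hy => by
    rw [diffOp_add (fun j => hτ.1 j y hy) fun j => hτ'.1 j y hy, hτ.2 i y hy, hτ'.2 i y hy,
      add_zero]⟩
  smul_mem' := fun c _ hτ => ⟨fun j => analyticOnNhd_const.mul (hτ.1 j), fun i y hy => by
    rw [diffOp_smul c fun j => hτ.1 j y hy, hτ.2 i y hy, mul_zero]⟩

/-- The jet map at a point of `V`, sending a solution to its derivatives of order `< d`. -/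
noncomputable def jet (q : ℕ) (a : ι → κ → (Fin n → ℕ) → (Fin n → ℂ) → ℂ) (hy : y ∈ V) (d : ℕ) :
    solutionSpace q a V →ₗ[ℂ] (κ × degLt n d → ℂ) where
  toFun τ p := mpd p.2.1 (fun z => τ.1 z p.1) y
  map_add' τ τ' := funext fun p => mpd_add _ (τ.2.1 p.1 y hy) (τ'.2.1 p.1 y hy)
  map_smul' c τ := funext fun p => mpd_const_mul _ c (τ.2.1 p.1 y hy)

end System

lemma exists_comp_eq_of_ker_le_ker {K M W X : Type*} [Field K] [AddCommGroup M] [Module K M]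
    [AddCommGroup W] [Module K W] [AddCommGroup X] [Module K X] {Φ : M →ₗ[K] W} {R : M →ₗ[K] X}
    (h : LinearMap.ker Φ ≤ LinearMap.ker R) : ∃ g : W →ₗ[K] X, g ∘ₗ Φ = R := by
  obtain ⟨g, hg⟩ := ((LinearMap.ker Φ).liftQ Φ le_rfl).exists_leftInverse_of_injective
    (Submodule.ker_liftQ_eq_bot _ _ _ le_rfl)
  refine ⟨(LinearMap.ker Φ).liftQ R h ∘ₗ g, LinearMap.ext fun x => ?_⟩
  have hx : g (Φ x) = (LinearMap.ker Φ).mkQ x := LinearMap.congr_fun hg ((LinearMap.ker Φ).mkQ x)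
  simp [hx]

end FiniteType

open FiniteType

theorem finite_type_finite_dimensional_solutions_general {n q r : ℕ} {ι κ : Type*} [Fintype κ]
    {a : ι → κ → (Fin n → ℕ) → (Fin n → ℂ) → ℂ} {y0 : Fin n → ℂ} {V : Set (Fin n → ℂ)}
    (ha : ∀ i j α, ∑ l, α l ≤ q → AnalyticAt ℂ (a i j α) y0)
    (hsymb : HasTrivialSymbol q r fun i j α => a i j α y0)
    (hV : IsPreconnected V) (hy0 : V ∈ 𝓝 y0) :
    Module.rank ℂ ↥(Submodule.span ℂ (V.domRestrict '' {τ | IsSolutionOn q a V τ})) ≤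
      ((Fintype.card κ * (degLt n (q + r)).card : ℕ) : Cardinal) := by
  let restrictV : solutionSpace q a V →ₗ[ℂ] (V → κ → ℂ) :=
    LinearMap.funLeft ℂ (κ → ℂ) Subtype.val ∘ₗ (solutionSpace q a V).subtype
  have hker : LinearMap.ker (jet q a (mem_of_mem_nhds hy0) (q + r)) ≤ LinearMap.ker restrictV :=
    fun τ hτ => funext fun y => τ.2.eqOn_zero hV hy0 ha hsymb
      (fun γ hγ j => congrFun hτ (j, ⟨γ, hγ⟩)) y.2
  obtain ⟨g, hg⟩ := exists_comp_eq_of_ker_le_ker hker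
  have hspan : Submodule.span ℂ (V.domRestrict '' {τ | IsSolutionOn q a V τ}) ≤
      LinearMap.range g := by
    rw [Submodule.span_le]
    rintro _ ⟨τ, hτ, rfl⟩
    exact ⟨_, LinearMap.congr_fun hg ⟨τ, hτ⟩⟩
  calc _ ≤ Module.rank ℂ (LinearMap.range g) := Submodule.rank_mono hspan
    _ ≤ Module.rank ℂ (κ × degLt n (q + r) → ℂ) := rank_range_le g
    _ = _ := by rw [rank_fun', Fintype.card_prod, Fintype.card_coe]

/-- Let `U ⊆ ℂⁿ` be open, `y⁰ ∈ U`, and consider the homogeneous linear PDE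
system `(R_q)` of order `q`: `∑_{j=1}^m ∑_{|α| ≤ q} a^i_{jα}(y) ∂^α τ^j = 0` (`i = 1,…,s`),
with coefficients analytic on `U`.  Suppose there is `r ≥ 0` such that the symbol of the
`r`-prolongation of `(R_q)` at `y⁰` is trivial: the only family `v = (v^j_γ)` (indexed by
`j = 1,…,m` and multi-indices `γ` with `|γ| = q + r`) satisfying
`∑_{j=1}^m ∑_{|α| = q} a^i_{jα}(y⁰) v^j_{β+α} = 0` for every `i` and every `β` with
`|β| = r`, is `v = 0`.  Then for every connected open `V` with `y⁰ ∈ V ⊆ U`, the space of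
analytic solutions `τ : V → ℂ^m` of `(R_q)` is finite dimensional, of dimension at most
`m` times the number of multi-indices of degree `≤ q + r − 1` (i.e. `< q + r`) in `n`
variables. -/
theorem finite_type_finite_dimensional_solutions
    (n m s q r : ℕ)
    (U : Set (Fin n → ℂ)) (hU : IsOpen U) (y0 : Fin n → ℂ) (hy0 : y0 ∈ U)
    (a : Fin s → Fin m → (Fin n → ℕ) → (Fin n → ℂ) → ℂ)
    (ha : ∀ i j α, (∑ l, α l) ≤ q → AnalyticOnNhd ℂ (a i j α) U)
    (hsymb : ∀ v : (Fin n → ℕ) → Fin m → ℂ,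
      (∀ (i : Fin s) (β : Fin n → ℕ), (∑ l, β l) = r →
        ∑ j, ∑ α ∈ degEq n q, a i j α y0 * v (β + α) j = 0) →
      ∀ γ : Fin n → ℕ, (∑ l, γ l) = q + r → ∀ j, v γ j = 0) :
    ∀ V : Set (Fin n → ℂ), IsOpen V → IsConnected V → y0 ∈ V → V ⊆ U →
      Module.rank ℂ
        ↥(Submodule.span ℂ
          (V.restrict ''
            {τ : (Fin n → ℂ) → Fin m → ℂ |
              (∀ j, AnalyticOnNhd ℂ (fun y => τ y j) V) ∧
              ∀ (i : Fin s), ∀ y ∈ V,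
                ∑ j, ∑ α ∈ degLe n q, a i j α y * mpd α (fun z => τ z j) y = 0}))
        ≤ ((m * (degLt n (q + r)).card : ℕ) : Cardinal) := by
  intro V hV hVc hyV _
  have h := finite_type_finite_dimensional_solutions_general
    (fun i j α hα => ha i j α hα y0 hy0) hsymb hVc.isPreconnected (hV.mem_nhds hyV)
  rwa [Fintype.card_fin] at h
end

section
/- In the constant-coefficient setup: if V_s = {0} for some s ∈ ℕ, then V_{s'} = {0} for every s' ≥ s. -/
/-- Constant-coefficient setup: `K` equations, equation `k` of exact order `q k` with
constant coefficients `a k i α` (`|α| = q k`).  A formal solution is a family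
`D : multi-indices → ℂ^m` (the would-be partial derivatives at the origin of a solution)
such that for every `k` and every multi-index `β`,
`∑_{i=1}^m ∑_{|α| = q_k} a^k_{iα} D(β+α)_i = 0`. -/
def IsFormalSol {n m K : ℕ} (q : Fin K → ℕ) (a : Fin K → Fin m → (Fin n → ℕ) → ℂ)
    (D : (Fin n → ℕ) → Fin m → ℂ) : Prop :=
  ∀ (k : Fin K) (β : Fin n → ℕ),
    ∑ i, ∑ α ∈ degEq n (q k), a k i α * D (β + α) i = 0

/-- `v` is an element of the space `V_s`: a family assigning to each multi-index `γ` with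
`|γ| = s` a vector `v(γ) ∈ ℂ^m` (realized as a function on all multi-indices vanishing
off the degree-`s` ones) such that for every `k` and every multi-index `β` with
`|β| = s − q_k` (i.e. `|β| + q_k = s`), `∑_{i=1}^m ∑_{|α| = q_k} a^k_{iα} v(β+α)_i = 0`. -/
def MemVs {n m K : ℕ} (q : Fin K → ℕ) (a : Fin K → Fin m → (Fin n → ℕ) → ℂ)
    (s : ℕ) (v : (Fin n → ℕ) → Fin m → ℂ) : Prop :=
  (∀ γ : Fin n → ℕ, (∑ i, γ i) ≠ s → v γ = 0) ∧
  ∀ (k : Fin K) (β : Fin n → ℕ), (∑ i, β i) + q k = s →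
    ∑ i, ∑ α ∈ degEq n (q k), a k i α * v (β + α) i = 0

lemma exists_le_sum_eq {ι : Type*} [Fintype ι] (γ : ι → ℕ) {d : ℕ} (hd : d ≤ ∑ i, γ i) :
    ∃ δ ≤ γ, ∑ i, δ i = d := by
  obtain ⟨δ, hδγ, hδ⟩ := Finsupp.exists_le_degree_eq (Finsupp.equivFunOnFinite.symm γ) d
    (by simpa only [Finsupp.degree_eq_sum, Finsupp.equivFunOnFinite_symm_apply_apply] using hd)
  exact ⟨δ, hδγ, by rw [← Finsupp.degree_eq_sum, hδ]⟩

lemma eq_zero_of_forall_shift_eq_zero {ι M : Type*} [Fintype ι] [Zero M] {d : ℕ}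
    {v : (ι → ℕ) → M} (hlow : ∀ γ, ∑ i, γ i < d → v γ = 0)
    (hshift : ∀ δ : ι → ℕ, ∑ i, δ i = d → (fun γ ↦ v (γ + δ)) = 0) : v = 0 := by
  funext γ
  rcases lt_or_ge (∑ i, γ i) d with hγ | hγ
  · exact hlow γ hγ
  · obtain ⟨δ, hδγ, hδ⟩ := exists_le_sum_eq γ hγ
    calc
      v γ = v (γ - δ + δ) := by rw [tsub_add_cancel_of_le hδγ]
      _ = 0 := congrFun (hshift δ hδ) (γ - δ)

lemma MemVs.shift {n m K : ℕ} {q : Fin K → ℕ} {a : Fin K → Fin m → (Fin n → ℕ) → ℂ} {s : ℕ}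
    {v : (Fin n → ℕ) → Fin m → ℂ} (δ : Fin n → ℕ) (hv : MemVs q a (s + ∑ i, δ i) v) :
    MemVs q a s (fun γ ↦ v (γ + δ)) := by
  obtain ⟨hsupp, heq⟩ := hv
  have sum_add_shift (γ : Fin n → ℕ) : ∑ i, (γ + δ) i = ∑ i, γ i + ∑ i, δ i :=
    Finset.sum_add_distrib
  refine ⟨fun γ hγ ↦ hsupp (γ + δ) ?_, fun k β hβ ↦ ?_⟩
  · rwa [sum_add_shift, Ne, Nat.add_right_cancel_iff]
  · have hβδ : ∑ i, (β + δ) i + q k = s + ∑ i, δ i := by rw [sum_add_shift, ← hβ, add_right_comm]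
    simpa only [add_right_comm β] using heq k (β + δ) hβδ

/-- In the constant-coefficient setup, if `V_s = {0}` for some `s ∈ ℕ`,
then `V_{s'} = {0}` for every `s' ≥ s`. -/
theorem Vs_trivial_mono
    (n m K : ℕ) (hn : 0 < n) (hm : 0 < m)
    (q : Fin K → ℕ) (a : Fin K → Fin m → (Fin n → ℕ) → ℂ)
    (s : ℕ) (hVs : ∀ v : (Fin n → ℕ) → Fin m → ℂ, MemVs q a s v → v = 0) :
    ∀ s' : ℕ, s ≤ s' →
      ∀ v : (Fin n → ℕ) → Fin m → ℂ, MemVs q a s' v → v = 0 := by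
  intro s' hs v hv
  obtain ⟨d, rfl⟩ := Nat.exists_eq_add_of_le hs
  refine eq_zero_of_forall_shift_eq_zero (d := d) (fun γ hγ ↦ hv.1 γ (by omega)) fun δ hδ ↦ ?_
  subst hδ
  exact hVs _ (hv.shift δ)
end

section
/- In the constant-coefficient setup: the ℂ-vector space of formal solutions of the system is finite dimensional if and only if there exists s ∈ ℕ with V_s = {0}. -/
/-!
The equations are homogeneous with constant coefficients, so the space of formal solutions is
stable both under taking the part of order `s` and under differentiation, which shifts the
multi-index. By the first stability the nonzero `V_s` form an independent family of subspaces of the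
solution space, hence are finite in number when the latter is Noetherian. By the second, a value
`D (ε + δ)` with `|δ| = s` is a value of an element of `V_s`; if `V_s = 0`, every formal solution
vanishes from order `s` on and is determined by its finitely many remaining values.
-/

section NoetherianBound

variable {R X ι : Type*} [Ring R] [AddCommGroup X] [Module R X]

lemma finite_ne_bot_of_iSupIndep_of_le {P : Submodule R X} [IsNoetherian R P]
    {W : ι → Submodule R X} (hW : iSupIndep W) (hle : ∀ i, W i ≤ P) : {i | W i ≠ ⊥}.Finite := by
  have : WellFoundedGT (Set.Iic P) :=
    (Submodule.mapIic P).symm.toOrderEmbedding.wellFoundedGT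
  have hindep : iSupIndep fun i => (⟨W i, hle i⟩ : Set.Iic P) := iSupIndep.of_coe_Iic_comp hW
  refine (WellFoundedGT.finite_ne_bot_of_iSupIndep hindep).subset fun i hi hbot => ?_
  exact hi (congrArg Subtype.val hbot)

end NoetherianBound

section MultiIndex

variable {σ : Type*} [Fintype σ]

lemma exists_add_eq_of_le_sum (γ : σ → ℕ) {s : ℕ} (h : s ≤ ∑ i, γ i) :
    ∃ ε δ : σ → ℕ, ε + δ = γ ∧ ∑ i, δ i = s := by
  obtain ⟨δ, hle, hδ⟩ := (Finsupp.equivFunOnFinite.symm γ).exists_le_degree_eq s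
    (by simpa [Finsupp.degree_eq_sum] using h)
  exact ⟨γ - δ, δ, tsub_add_cancel_of_le hle, by rw [← hδ, Finsupp.degree_eq_sum]⟩

lemma finite_setOf_sum_lt (s : ℕ) : {γ : σ → ℕ | ∑ i, γ i < s}.Finite := by
  refine ((Finsupp.finite_of_degree_lt s).image Finsupp.equivFunOnFinite).subset fun γ hγ => ?_
  exact ⟨Finsupp.equivFunOnFinite.symm γ, by simpa [Finsupp.degree_eq_sum] using hγ, by simp⟩

end MultiIndex

section HomogeneousPart

variable {R M σ : Type*} [Ring R] [AddCommGroup M] [Module R M] [Fintype σ]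

variable (R M σ) in
/-- The families `γ ↦ v γ` concentrated in order `s`, i.e. vanishing unless `|γ| = s`. They encode
the families indexed only by the multi-indices of order `s`, extended by zero. -/
def homogeneousFamilies (s : ℕ) : Submodule R ((σ → ℕ) → M) :=
  Submodule.pi {γ | ∑ i, γ i ≠ s} fun _ => ⊥

variable (R) in
/-- The projection of a family of derivatives onto its part of order `s`. -/
def homogeneousPart (s : ℕ) : ((σ → ℕ) → M) →ₗ[R] ((σ → ℕ) → M) :=
  LinearMap.pi fun γ => if ∑ i, γ i = s then LinearMap.proj γ else 0

lemma homogeneousPart_apply (s : ℕ) (D : (σ → ℕ) → M) (γ : σ → ℕ) :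
    homogeneousPart R s D γ = if ∑ i, γ i = s then D γ else 0 := by
  rw [homogeneousPart, LinearMap.pi_apply]
  split_ifs <;> rfl

lemma mem_homogeneousFamilies {s : ℕ} {v : (σ → ℕ) → M} :
    v ∈ homogeneousFamilies R M σ s ↔ ∀ γ : σ → ℕ, ∑ i, γ i ≠ s → v γ = 0 := by
  simp [homogeneousFamilies, Submodule.mem_pi]

lemma homogeneousPart_mem_homogeneousFamilies (s : ℕ) (D : (σ → ℕ) → M) :
    homogeneousPart R s D ∈ homogeneousFamilies R M σ s :=
  mem_homogeneousFamilies.2 fun γ hγ => by rw [homogeneousPart_apply, if_neg hγ]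

lemma homogeneousPart_eq_self {s : ℕ} {v : (σ → ℕ) → M} (hv : v ∈ homogeneousFamilies R M σ s) :
    homogeneousPart R s v = v := by
  ext γ
  rw [homogeneousPart_apply, ite_eq_left_iff]
  exact fun hγ => (mem_homogeneousFamilies.1 hv γ hγ).symm

lemma homogeneousPart_eq_zero {s t : ℕ} (hts : t ≠ s) {v : (σ → ℕ) → M}
    (hv : v ∈ homogeneousFamilies R M σ t) : homogeneousPart R s v = 0 := by
  ext γ
  rw [homogeneousPart_apply, Pi.zero_apply, ite_eq_right_iff]
  exact fun hγ => mem_homogeneousFamilies.1 hv γ (hγ.trans_ne hts.symm)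

variable (R M σ) in
lemma iSupIndep_homogeneousFamilies : iSupIndep (homogeneousFamilies R M σ) := by
  intro s
  have hker : ⨆ t, ⨆ (_ : t ≠ s), homogeneousFamilies R M σ t ≤
      LinearMap.ker (homogeneousPart R s) :=
    iSup₂_le fun t hts v hv => homogeneousPart_eq_zero hts hv
  refine Submodule.disjoint_def.2 fun v hv hv' => ?_
  rw [← homogeneousPart_eq_self hv]
  exact hker hv'

end HomogeneousPart

section ConstCoeffOp

variable {R M N σ : Type*} [Ring R] [AddCommGroup M] [Module R M] [AddCommGroup N] [Module R N]
  [Fintype σ] [DecidableEq σ] (d : ℕ) (a : (σ → ℕ) → M →ₗ[R] N)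

/-- The constant-coefficient differential operator `∑_{|α| = d} a α ∂^α` from `M`-valued to
`N`-valued functions, acting on the families of derivatives at the origin. -/
def constCoeffOp : ((σ → ℕ) → M) →ₗ[R] ((σ → ℕ) → N) :=
  LinearMap.pi fun β => ∑ α ∈ Finset.piAntidiag Finset.univ d, a α ∘ₗ LinearMap.proj (β + α)

lemma constCoeffOp_apply (D : (σ → ℕ) → M) (β : σ → ℕ) :
    constCoeffOp d a D β = ∑ α ∈ Finset.piAntidiag Finset.univ d, a α (D (β + α)) := by
  simp [constCoeffOp]

lemma constCoeffOp_homogeneousPart_apply (s : ℕ) (D : (σ → ℕ) → M) (β : σ → ℕ) :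
    constCoeffOp d a (homogeneousPart R s D) β =
      if ∑ i, β i + d = s then constCoeffOp d a D β else 0 := by
  have horder (α : σ → ℕ) (hα : α ∈ Finset.piAntidiag Finset.univ d) :
      ∑ i, (β + α) i = ∑ i, β i + d := by
    simp only [Pi.add_apply, Finset.sum_add_distrib, (Finset.mem_piAntidiag.1 hα).1]
  simp_rw [constCoeffOp_apply, homogeneousPart_apply]
  split_ifs with h
  · exact Finset.sum_congr rfl fun α hα => by rw [horder α hα, if_pos h]
  · exact Finset.sum_eq_zero fun α hα => by rw [horder α hα, if_neg h, map_zero]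

lemma constCoeffOp_shift_apply (ε : σ → ℕ) (D : (σ → ℕ) → M) (β : σ → ℕ) :
    constCoeffOp d a (fun γ => D (ε + γ)) β = constCoeffOp d a D (ε + β) := by
  simp only [constCoeffOp_apply, add_assoc]

end ConstCoeffOp

section FormalSolutions

variable {R M N σ κ : Type*} [Ring R] [AddCommGroup M] [Module R M] [AddCommGroup N] [Module R N]
  [Fintype σ] [DecidableEq σ] (q : κ → ℕ) (a : κ → (σ → ℕ) → M →ₗ[R] N)

/-- The module of formal solutions of the system `∑_{|α| = q k} a k α ∂^α u = 0`, with unknown `u`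
valued in `M` and equations indexed by `k`. The scalar coefficients of an equation in `m` unknown
functions are gathered into linear maps `a k α`. -/
def formalSolutions : Submodule R ((σ → ℕ) → M) :=
  ⨅ k, LinearMap.ker (constCoeffOp (q k) (a k))

/-- The module `V_s`, encoded as the formal solutions concentrated in order `s`; see
`mem_homogeneousSolutions` for the description by the equations of order `s` alone. -/
def homogeneousSolutions (s : ℕ) : Submodule R ((σ → ℕ) → M) :=
  homogeneousFamilies R M σ s ⊓ formalSolutions q a

variable {q a}

lemma mem_formalSolutions {D : (σ → ℕ) → M} :
    D ∈ formalSolutions q a ↔ ∀ k β, constCoeffOp (q k) (a k) D β = 0 := by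
  simp [formalSolutions, funext_iff]

lemma mem_homogeneousSolutions {s : ℕ} {v : (σ → ℕ) → M} :
    v ∈ homogeneousSolutions q a s ↔ (∀ γ : σ → ℕ, ∑ i, γ i ≠ s → v γ = 0) ∧
      ∀ k β, ∑ i, β i + q k = s → constCoeffOp (q k) (a k) v β = 0 := by
  rw [homogeneousSolutions, Submodule.mem_inf, mem_formalSolutions,
    ← mem_homogeneousFamilies (R := R)]
  refine and_congr_right fun hv => forall₂_congr fun k β => ?_
  conv_lhs =>
    rw [← homogeneousPart_eq_self hv, constCoeffOp_homogeneousPart_apply, ite_eq_right_iff]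

lemma homogeneousPart_mem_homogeneousSolutions (s : ℕ) {D : (σ → ℕ) → M}
    (hD : D ∈ formalSolutions q a) : homogeneousPart R s D ∈ homogeneousSolutions q a s := by
  refine ⟨homogeneousPart_mem_homogeneousFamilies s D, mem_formalSolutions.2 fun k β => ?_⟩
  rw [constCoeffOp_homogeneousPart_apply, mem_formalSolutions.1 hD, ite_self]

lemma shift_mem_formalSolutions (ε : σ → ℕ) {D : (σ → ℕ) → M} (hD : D ∈ formalSolutions q a) :
    (fun γ => D (ε + γ)) ∈ formalSolutions q a :=
  mem_formalSolutions.2 fun k β => by rw [constCoeffOp_shift_apply, mem_formalSolutions.1 hD]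

lemma finite_setOf_homogeneousSolutions_ne_bot [IsNoetherian R (formalSolutions q a)] :
    {s | homogeneousSolutions q a s ≠ ⊥}.Finite :=
  finite_ne_bot_of_iSupIndep_of_le
    ((iSupIndep_homogeneousFamilies R M σ).mono fun _ => inf_le_left) fun _ => inf_le_right

lemma apply_eq_zero_of_homogeneousSolutions_eq_bot {s : ℕ} (hs : homogeneousSolutions q a s = ⊥)
    {D : (σ → ℕ) → M} (hD : D ∈ formalSolutions q a) {γ : σ → ℕ} (hγ : s ≤ ∑ i, γ i) :
    D γ = 0 := by
  obtain ⟨ε, δ, rfl, hδ⟩ := exists_add_eq_of_le_sum γ hγ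
  have hpart : homogeneousPart R s (fun γ => D (ε + γ)) = 0 :=
    (Submodule.eq_bot_iff _).1 hs _
      (homogeneousPart_mem_homogeneousSolutions s (shift_mem_formalSolutions ε hD))
  calc
    D (ε + δ) = homogeneousPart R s (fun γ => D (ε + γ)) δ := by
      rw [homogeneousPart_apply, if_pos hδ]
    _ = 0 := congrFun hpart δ

lemma isNoetherian_formalSolutions [IsNoetherian R M] {s : ℕ}
    (hs : homogeneousSolutions q a s = ⊥) : IsNoetherian R (formalSolutions q a) := by
  have := (finite_setOf_sum_lt (σ := σ) s).to_subtype
  let lowOrderValues : formalSolutions q a →ₗ[R] ({γ : σ → ℕ | ∑ i, γ i < s} → M) :=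
    LinearMap.funLeft R M Subtype.val ∘ₗ (formalSolutions q a).subtype
  refine isNoetherian_of_injective lowOrderValues
    ((injective_iff_map_eq_zero _).2 fun D hD => Subtype.ext <| funext fun γ => ?_)
  obtain hγ | hγ := lt_or_ge (∑ i, γ i) s
  · exact congrFun hD ⟨γ, hγ⟩
  · exact apply_eq_zero_of_homogeneousSolutions_eq_bot hs D.2 hγ

variable (q a) in
theorem formal_solutions_finiteDimensional_iff_general [IsNoetherian R M] :
    IsNoetherian R (formalSolutions q a) ↔ ∃ s, homogeneousSolutions q a s = ⊥ := by
  refine ⟨fun _ => ?_, fun ⟨_, hs⟩ => isNoetherian_formalSolutions hs⟩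
  simpa using (finite_setOf_homogeneousSolutions_ne_bot (q := q) (a := a)).exists_notMem

end FormalSolutions

section Coordinates

variable {n m K : ℕ} {q : Fin K → ℕ} {a : Fin K → Fin m → (Fin n → ℕ) → ℂ}

/-- The coefficients `a k i α` of the unknowns `u^i`, gathered into the linear form
`x ↦ ∑ i, a k i α * x i` on `ℂ^m`. -/
def coeffForm (a : Fin K → Fin m → (Fin n → ℕ) → ℂ) (k : Fin K) (α : Fin n → ℕ) :
    (Fin m → ℂ) →ₗ[ℂ] ℂ :=
  Fintype.linearCombination ℂ fun i => a k i α

lemma degEq_eq_piAntidiag (n d : ℕ) : degEq n d = Finset.piAntidiag Finset.univ d := by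
  ext α
  have hle (h : ∑ i, α i = d) : α ≤ fun _ => d := fun i =>
    h ▸ Finset.single_le_sum (fun _ _ => Nat.zero_le _) (Finset.mem_univ i)
  simpa [degEq] using hle

lemma constCoeffOp_coeffForm_apply (k : Fin K) (d : ℕ) (D : (Fin n → ℕ) → Fin m → ℂ)
    (β : Fin n → ℕ) : constCoeffOp d (coeffForm a k) D β =
      ∑ i, ∑ α ∈ degEq n d, a k i α * D (β + α) i := by
  rw [constCoeffOp_apply, degEq_eq_piAntidiag, Finset.sum_comm]
  simp only [coeffForm, Fintype.linearCombination_apply, smul_eq_mul, mul_comm]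

variable (q a) in
lemma span_setOf_isFormalSol :
    Submodule.span ℂ {D | IsFormalSol q a D} = formalSolutions q (coeffForm a) := by
  have hset : {D | IsFormalSol q a D} = formalSolutions q (coeffForm a) := by
    ext D
    simp only [Set.mem_ofPred_eq, SetLike.mem_coe, mem_formalSolutions,
      constCoeffOp_coeffForm_apply, IsFormalSol]
  rw [hset, Submodule.span_eq]

lemma memVs_iff_mem_homogeneousSolutions {s : ℕ} {v : (Fin n → ℕ) → Fin m → ℂ} :
    MemVs q a s v ↔ v ∈ homogeneousSolutions q (coeffForm a) s := by
  simp only [mem_homogeneousSolutions, constCoeffOp_coeffForm_apply, MemVs]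

end Coordinates

/-- In the constant-coefficient setup, the `ℂ`-vector space of formal
solutions of the system is finite dimensional if and only if there exists `s ∈ ℕ`
with `V_s = {0}`. -/
theorem formal_solutions_finiteDimensional_iff
    (n m K : ℕ) (hn : 0 < n) (hm : 0 < m)
    (q : Fin K → ℕ) (a : Fin K → Fin m → (Fin n → ℕ) → ℂ) :
    Module.rank ℂ
        ↥(Submodule.span ℂ {D : (Fin n → ℕ) → Fin m → ℂ | IsFormalSol q a D})
      < Cardinal.aleph0
    ↔ ∃ s : ℕ, ∀ v : (Fin n → ℕ) → Fin m → ℂ, MemVs q a s v → v = 0 := by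
  simp only [memVs_iff_mem_homogeneousSolutions, ← Submodule.eq_bot_iff]
  rw [Module.rank_lt_aleph0_iff, ← IsNoetherian.iff_fg, span_setOf_isFormalSol,
    formal_solutions_finiteDimensional_iff_general]
end

section
/- Let U ⊆ ℂ² be a connected open set with coordinates (x,u), and for t = 1,2,3,4 let linear expressions L_t(θ,η) = c_t¹ θ + c_t² η + c_t³ θ_x + c_t⁴ θ_u + c_t⁵ η_x + c_t⁶ η_u be given, where all coefficients c_t^ν are analytic functions on U. Then the ℂ-vector space of pairs (θ, η) of analytic functions on U satisfying the system η_{xx} = L₁(θ,η), 2η_{xu} − θ_{xx} = L₂(θ,η), η_{uu} − 2θ_{xu} = L₃(θ,η), θ_{uu} = L₄(θ,η) on U has dimension at most 8. In particular, the Lie equations (for the coefficients of an infinitesimal symmetry X = θ ∂/∂x + η ∂/∂u) of any holomorphic second order ordinary differential equation u_{xx} = F(x,u,u_x) are of this form, so the algebra of infinitesimal symmetries of such an equation has dimension at most 8. -/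
/-- Partial derivative in the first coordinate `x` of a function on `ℂ² = ℂ × ℂ`. -/
noncomputable def pdx (g : ℂ × ℂ → ℂ) : ℂ × ℂ → ℂ := fun p => fderiv ℂ g p (1, 0)

/-- Partial derivative in the second coordinate `u` of a function on `ℂ² = ℂ × ℂ`. -/
noncomputable def pdu (g : ℂ × ℂ → ℂ) : ℂ × ℂ → ℂ := fun p => fderiv ℂ g p (0, 1)

/-- The general first-order linear expression
`L(θ,η) = c⁰ θ + c¹ η + c² θ_x + c³ θ_u + c⁴ η_x + c⁵ η_u` with given coefficient
functions `c : Fin 6 → (ℂ × ℂ → ℂ)`. -/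
noncomputable def linExpr (c : Fin 6 → (ℂ × ℂ → ℂ)) (θ η : ℂ × ℂ → ℂ) (z : ℂ × ℂ) : ℂ :=
  c 0 z * θ z + c 1 z * η z + c 2 z * pdx θ z + c 3 z * pdu θ z
    + c 4 z * pdx η z + c 5 z * pdu η z

/-!
The system is of finite type. The four equations leave `η_{xu}` and `θ_{xu}` as the only free second
derivatives, and differentiating them once determines all derivatives of these two: `η_{xxu}` and
`θ_{xuu}` are derivatives of the first and the fourth equation, while `η_{xuu}` and `θ_{xxu}` solve
the linear system `2 η_{xuu} - θ_{xxu} = ∂_u L₂`, `η_{xuu} - 2 θ_{xxu} = ∂_x L₃`, of determinant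
`-3`. Hence `Y = (θ, η, θ_x, θ_u, η_x, η_u, η_{xu}, θ_{xu})` satisfies `dY = A Y` near a point, with
`A` analytic. Only the consequence `dY = O(Y)` matters: by Grönwall's inequality along segments, `Y`
vanishes near every point at which it vanishes, and then `θ = η = 0` by the identity theorem. So the
value of `Y` at one point, a vector of `ℂ⁸`, determines the solution.
-/

open Asymptotics Filter Topology

/-! ### Directional derivatives -/

section DirDeriv

variable (𝕜 : Type*) {E F : Type*} [NontriviallyNormedField 𝕜]
  [NormedAddCommGroup E] [NormedSpace 𝕜 E] [NormedAddCommGroup F] [NormedSpace 𝕜 F]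

/-- The derivative of `f` along the constant vector field `v`. Unlike `lineDeriv`, it is read off
the Fréchet derivative, so that `pdx` and `pdu` are definitionally instances of it. -/
noncomputable def dirDeriv (v : E) (f : E → F) : E → F := fun z => fderiv 𝕜 f z v

variable {𝕜} {f g : E → F} {z : E}

theorem dirDeriv_congr (h : f =ᶠ[𝓝 z] g) (v : E) : dirDeriv 𝕜 v f =ᶠ[𝓝 z] dirDeriv 𝕜 v g :=
  h.fderiv.fun_comp fun L : E →L[𝕜] F => L v

theorem dirDeriv_add (hf : DifferentiableAt 𝕜 f z) (hg : DifferentiableAt 𝕜 g z) (v : E) :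
    dirDeriv 𝕜 v (f + g) z = dirDeriv 𝕜 v f z + dirDeriv 𝕜 v g z := by
  simp only [dirDeriv, fderiv_add hf hg, add_apply]

theorem dirDeriv_sub (hf : DifferentiableAt 𝕜 f z) (hg : DifferentiableAt 𝕜 g z) (v : E) :
    dirDeriv 𝕜 v (f - g) z = dirDeriv 𝕜 v f z - dirDeriv 𝕜 v g z := by
  simp only [dirDeriv, fderiv_sub hf hg, sub_apply]

theorem dirDeriv_const_smul (a : 𝕜) (f : E → F) (v : E) :
    dirDeriv 𝕜 v (a • f) = a • dirDeriv 𝕜 v f := by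
  ext z
  simp only [dirDeriv, fderiv_const_smul_field, smul_apply, Pi.smul_apply]

variable [CompleteSpace F]

theorem analyticAt_dirDeriv (hf : AnalyticAt 𝕜 f z) (v : E) : AnalyticAt 𝕜 (dirDeriv 𝕜 v f) z :=
  ((ContinuousLinearMap.apply 𝕜 F v).analyticAt _).comp hf.fderiv

theorem dirDeriv_dirDeriv_add (hf : AnalyticAt 𝕜 f z) (hg : AnalyticAt 𝕜 g z) (v w : E) :
    dirDeriv 𝕜 v (dirDeriv 𝕜 w (f + g)) z =
      dirDeriv 𝕜 v (dirDeriv 𝕜 w f) z + dirDeriv 𝕜 v (dirDeriv 𝕜 w g) z := by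
  have hadd : dirDeriv 𝕜 w (f + g) =ᶠ[𝓝 z] dirDeriv 𝕜 w f + dirDeriv 𝕜 w g := by
    filter_upwards [hf.eventually_analyticAt, hg.eventually_analyticAt] with y hfy hgy
    exact dirDeriv_add hfy.differentiableAt hgy.differentiableAt w
  rw [(dirDeriv_congr hadd v).eq_of_nhds]
  exact dirDeriv_add (analyticAt_dirDeriv hf w).differentiableAt
    (analyticAt_dirDeriv hg w).differentiableAt v

theorem dirDeriv_dirDeriv_apply (hf : AnalyticAt 𝕜 f z) (v w : E) :
    dirDeriv 𝕜 v (dirDeriv 𝕜 w f) z = fderiv 𝕜 (fderiv 𝕜 f) z v w :=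
  congrArg (· v) ((ContinuousLinearMap.apply 𝕜 F w).hasFDerivAt.comp z
    hf.fderiv.differentiableAt.hasFDerivAt).fderiv

theorem dirDeriv_comm (hf : AnalyticAt 𝕜 f z) (v w : E) :
    dirDeriv 𝕜 v (dirDeriv 𝕜 w f) z = dirDeriv 𝕜 w (dirDeriv 𝕜 v f) z := by
  rw [dirDeriv_dirDeriv_apply hf, dirDeriv_dirDeriv_apply hf]
  exact hf.contDiffAt.isSymmSndFDerivAt_of_omega v w

theorem dirDeriv_comm_eventuallyEq (hf : AnalyticAt 𝕜 f z) (v w : E) :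
    dirDeriv 𝕜 v (dirDeriv 𝕜 w f) =ᶠ[𝓝 z] dirDeriv 𝕜 w (dirDeriv 𝕜 v f) :=
  hf.eventually_analyticAt.mono fun _ hy => dirDeriv_comm hy v w

theorem dirDeriv_comm_dirDeriv (hf : AnalyticAt 𝕜 f z) (v w₁ w₂ : E) :
    dirDeriv 𝕜 v (dirDeriv 𝕜 w₁ (dirDeriv 𝕜 w₂ f)) z =
      dirDeriv 𝕜 w₁ (dirDeriv 𝕜 w₂ (dirDeriv 𝕜 v f)) z :=
  (dirDeriv_comm (analyticAt_dirDeriv hf w₂) v w₁).trans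
    (dirDeriv_congr (dirDeriv_comm_eventuallyEq hf v w₂) w₁).eq_of_nhds

end DirDeriv

theorem pdx_eq_dirDeriv : pdx = dirDeriv ℂ (1, 0) := rfl

theorem pdu_eq_dirDeriv : pdu = dirDeriv ℂ (0, 1) := rfl

/-! ### Functions whose derivative is dominated -/

section Domination

variable {𝕜 F G : Type*} [NontriviallyNormedField 𝕜] [NormedAddCommGroup F] [NormedSpace 𝕜 F]
  [NormedAddCommGroup G]

theorem isBigO_smul_of_continuousAt {X : Type*} [TopologicalSpace X] {x₀ : X} {a : X → 𝕜}
    {f : X → F} {Y : X → G} (ha : ContinuousAt a x₀) (hf : f =O[𝓝 x₀] Y) :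
    (a • f) =O[𝓝 x₀] Y :=
  (((ha.isBigO_one ℝ).smul hf.norm_right).congr_right fun _ => one_smul ℝ _).of_norm_right

variable {E : Type*} [NormedAddCommGroup E] [NormedSpace 𝕜 E] {z₀ : E} {Y : E → G}

theorem isBigO_fderiv_smul [CompleteSpace 𝕜] {a : E → 𝕜} {f : E → F} (ha : AnalyticAt 𝕜 a z₀)
    (hf : ∀ᶠ z in 𝓝 z₀, DifferentiableAt 𝕜 f z) (hfY : f =O[𝓝 z₀] Y)
    (hf'Y : fderiv 𝕜 f =O[𝓝 z₀] Y) : fderiv 𝕜 (a • f) =O[𝓝 z₀] Y := by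
  have hleibniz : fderiv 𝕜 (a • f) =ᶠ[𝓝 z₀]
      fun z => a z • fderiv 𝕜 f z + (fderiv 𝕜 a z).smulRight (f z) := by
    filter_upwards [ha.eventually_analyticAt, hf] with z haz hfz
    exact fderiv_smul haz.differentiableAt hfz
  have hcoeff : (fun z => (fderiv 𝕜 a z).smulRight (f z)) =O[𝓝 z₀] Y := by
    refine .of_norm_left ?_
    simp only [ContinuousLinearMap.norm_smulRight_apply]
    exact isBigO_smul_of_continuousAt ha.fderiv.continuousAt.norm hfY.norm_left
  exact ((isBigO_smul_of_continuousAt ha.continuousAt hf'Y).add hcoeff).congr'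
    hleibniz.symm .rfl

theorem isBigO_fderiv_sum {ι : Type*} {s : Finset ι} {f : ι → E → F}
    (hf : ∀ i ∈ s, ∀ᶠ z in 𝓝 z₀, DifferentiableAt 𝕜 (f i) z)
    (hf'Y : ∀ i ∈ s, fderiv 𝕜 (f i) =O[𝓝 z₀] Y) :
    fderiv 𝕜 (∑ i ∈ s, f i) =O[𝓝 z₀] Y := by
  refine (IsBigO.sum hf'Y).congr' ?_ .rfl
  filter_upwards [(Finset.eventually_all s).2 hf] with z hz
  rw [Finset.sum_apply, fderiv_sum hz]

theorem isBigO_fderiv_pi {ι : Type*} [Fintype ι] {f : ι → E → F}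
    (hf : ∀ i, ∀ᶠ z in 𝓝 z₀, DifferentiableAt 𝕜 (f i) z)
    (hf'Y : ∀ i, fderiv 𝕜 (f i) =O[𝓝 z₀] Y) :
    fderiv 𝕜 (fun z i => f i z) =O[𝓝 z₀] Y := by
  have hpi : fderiv 𝕜 (fun z i => f i z) =ᶠ[𝓝 z₀]
      fun z => ContinuousLinearMap.pi fun i => fderiv 𝕜 (f i) z :=
    (eventually_all.2 hf).mono fun z hz => fderiv_pi hz
  have hnorm (z : E) : ‖ContinuousLinearMap.pi fun i => fderiv 𝕜 (f i) z‖ ≤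
      ‖fun i => fderiv 𝕜 (f i) z‖ :=
    ContinuousLinearMap.opNorm_le_bound _ (norm_nonneg _) fun v =>
      (pi_norm_le_iff_of_nonneg (by positivity)).2 fun i =>
        (fderiv 𝕜 (f i) z).le_of_opNorm_le (norm_le_pi_norm (fun i => fderiv 𝕜 (f i) z) i) v
  exact ((IsBigO.of_norm_le hnorm).trans (isBigO_pi.2 hf'Y).norm_left).congr' hpi.symm .rfl

end Domination

theorem isBigO_fderiv_iff {G : Type*} [NormedAddCommGroup G] {l : Filter (ℂ × ℂ)}
    {f : ℂ × ℂ → ℂ} {Y : ℂ × ℂ → G} :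
    fderiv ℂ f =O[l] Y ↔ pdx f =O[l] Y ∧ pdu f =O[l] Y := by
  refine ⟨fun h => ⟨?_, ?_⟩, fun ⟨hx, hu⟩ => ?_⟩
  · exact ((ContinuousLinearMap.apply ℂ ℂ ((1, 0) : ℂ × ℂ)).isBigO_comp _ l).trans h
  · exact ((ContinuousLinearMap.apply ℂ ℂ ((0, 1) : ℂ × ℂ)).isBigO_comp _ l).trans h
  · have hsplit (z : ℂ × ℂ) : pdx f z • ContinuousLinearMap.fst ℂ ℂ ℂ +
        pdu f z • ContinuousLinearMap.snd ℂ ℂ ℂ = fderiv ℂ f z := by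
      ext <;> simp [pdx, pdu]
    have hsmul {g : ℂ × ℂ → ℂ} (hg : g =O[l] Y) (L : ℂ × ℂ →L[ℂ] ℂ) :
        (fun z => g z • L) =O[l] Y :=
      ((ContinuousLinearMap.toSpanSingleton ℂ L).isBigO_comp g l).trans hg
    exact ((hsmul hx _).add (hsmul hu _)).congr_left hsplit

/-! ### Unique continuation -/

section UniqueContinuation

variable {E G : Type*} [NormedAddCommGroup E] [NormedAddCommGroup G]

theorem eventuallyEq_zero_of_hasFDerivAt_of_isBigO [NormedSpace ℝ E] [NormedSpace ℝ G]
    {f : E → G} {f' : E → E →L[ℝ] G} {z₀ : E} (hf : ∀ᶠ z in 𝓝 z₀, HasFDerivAt f (f' z) z)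
    (hf' : f' =O[𝓝 z₀] f) (h₀ : f z₀ = 0) : f =ᶠ[𝓝 z₀] 0 := by
  obtain ⟨C, hC⟩ := hf'.bound
  obtain ⟨r, hr, hball⟩ := Metric.eventually_nhds_iff_ball.1 (hf.and hC)
  filter_upwards [Metric.ball_mem_nhds z₀ hr] with z hz
  let p : ℝ → E := AffineMap.lineMap z₀ z
  have hp : ∀ t ∈ Set.Icc (0 : ℝ) 1, p t ∈ Metric.ball z₀ r := fun t ht =>
    (convex_ball z₀ r).lineMap_mem (Metric.mem_ball_self hr) hz ht
  have hderiv : ∀ t ∈ Set.Icc (0 : ℝ) 1, HasDerivAt (f ∘ p) (f' (p t) (z - z₀)) t := fun t ht =>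
    (hball _ (hp t ht)).1.comp_hasDerivAt t AffineMap.hasDerivAt_lineMap
  have hbound : ∀ t ∈ Set.Ico (0 : ℝ) 1,
      ‖f' (p t) (z - z₀)‖ ≤ C * ‖z - z₀‖ * ‖(f ∘ p) t‖ := fun t ht =>
    calc ‖f' (p t) (z - z₀)‖ ≤ C * ‖f (p t)‖ * ‖z - z₀‖ :=
          (f' (p t)).le_of_opNorm_le (hball _ (hp t (Set.Ico_subset_Icc_self ht))).2 _
      _ = C * ‖z - z₀‖ * ‖(f ∘ p) t‖ := mul_right_comm _ _ _
  have hzero := eq_zero_of_abs_deriv_le_mul_abs_self_of_eq_zero_right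
    (fun t ht => (hderiv t ht).continuousAt.continuousWithinAt)
    (fun t ht => (hderiv t (Set.Ico_subset_Icc_self ht)).hasDerivWithinAt)
    (by simpa [p] using h₀) hbound 1 (Set.right_mem_Icc.2 zero_le_one)
  simpa [p] using hzero

theorem eventuallyEq_zero_of_isBigO_fderiv {𝕜 : Type*} [RCLike 𝕜]
    [NormedSpace 𝕜 E] [NormedSpace ℝ E] [IsScalarTower ℝ 𝕜 E]
    [NormedSpace 𝕜 G] [NormedSpace ℝ G] [IsScalarTower ℝ 𝕜 G]
    {f : E → G} {z₀ : E} (hf : ∀ᶠ z in 𝓝 z₀, DifferentiableAt 𝕜 f z)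
    (hf' : fderiv 𝕜 f =O[𝓝 z₀] f) (h₀ : f z₀ = 0) : f =ᶠ[𝓝 z₀] 0 :=
  eventuallyEq_zero_of_hasFDerivAt_of_isBigO
    (f' := fun z => (fderiv 𝕜 f z).restrictScalars ℝ)
    (hf.mono fun _ hz => hz.hasFDerivAt.restrictScalars ℝ) (.of_norm_left hf'.norm_left) h₀

end UniqueContinuation

/-! ### The jets of a solution -/

/-- The first-order jet `(θ, η, θ_x, θ_u, η_x, η_u)`, in the order of the coefficients of
`linExpr`. -/
noncomputable def firstJet (θ η : ℂ × ℂ → ℂ) : Fin 6 → ℂ × ℂ → ℂ :=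
  ![θ, η, pdx θ, pdu θ, pdx η, pdu η]

/-- The first-order jet together with `η_{xu}` and `θ_{xu}`: the quantities in which the prolonged
system is closed under differentiation. -/
noncomputable def closedJet (θ η : ℂ × ℂ → ℂ) : Fin 8 → ℂ × ℂ → ℂ :=
  ![θ, η, pdx θ, pdu θ, pdx η, pdu η, pdu (pdx η), pdu (pdx θ)]

/-- The second-order parts of the Lie equations, that is, the left-hand sides of the four equations
of the system. -/
noncomputable def principalPart (θ η : ℂ × ℂ → ℂ) : Fin 4 → ℂ × ℂ → ℂ :=
  ![pdx (pdx η), (2 : ℂ) • pdu (pdx η) - pdx (pdx θ), pdu (pdu η) - (2 : ℂ) • pdu (pdx θ),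
    pdu (pdu θ)]

theorem linExpr_eq_sum (c : Fin 6 → ℂ × ℂ → ℂ) (θ η : ℂ × ℂ → ℂ) :
    linExpr c θ η = ∑ ν, c ν • firstJet θ η ν := by
  ext z
  simp [linExpr, firstJet, Fin.sum_univ_six]

section Linearity

variable {θ η θ' η' : ℂ × ℂ → ℂ} {z : ℂ × ℂ}

theorem firstJet_add (hθ : DifferentiableAt ℂ θ z) (hη : DifferentiableAt ℂ η z)
    (hθ' : DifferentiableAt ℂ θ' z) (hη' : DifferentiableAt ℂ η' z) (ν : Fin 6) :
    firstJet (θ + θ') (η + η') ν z = firstJet θ η ν z + firstJet θ' η' ν z := by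
  fin_cases ν
  exacts [rfl, rfl, dirDeriv_add hθ hθ' _, dirDeriv_add hθ hθ' _, dirDeriv_add hη hη' _,
    dirDeriv_add hη hη' _]

theorem firstJet_smul (a : ℂ) (θ η : ℂ × ℂ → ℂ) (ν : Fin 6) :
    firstJet (a • θ) (a • η) ν = a • firstJet θ η ν := by
  fin_cases ν
  exacts [rfl, rfl, dirDeriv_const_smul .., dirDeriv_const_smul .., dirDeriv_const_smul ..,
    dirDeriv_const_smul ..]

theorem linExpr_add (c : Fin 6 → ℂ × ℂ → ℂ)
    (hθ : DifferentiableAt ℂ θ z) (hη : DifferentiableAt ℂ η z)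
    (hθ' : DifferentiableAt ℂ θ' z) (hη' : DifferentiableAt ℂ η' z) :
    linExpr c (θ + θ') (η + η') z = linExpr c θ η z + linExpr c θ' η' z := by
  simp only [linExpr_eq_sum, Finset.sum_apply, Pi.smul_apply', firstJet_add hθ hη hθ' hη',
    smul_add, Finset.sum_add_distrib]

theorem linExpr_smul (c : Fin 6 → ℂ × ℂ → ℂ) (a : ℂ) (θ η : ℂ × ℂ → ℂ) :
    linExpr c (a • θ) (a • η) = a • linExpr c θ η := by
  simp only [linExpr_eq_sum, firstJet_smul, Finset.smul_sum, smul_comm a]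

theorem principalPart_add (hθ : AnalyticAt ℂ θ z) (hη : AnalyticAt ℂ η z)
    (hθ' : AnalyticAt ℂ θ' z) (hη' : AnalyticAt ℂ η' z) (t : Fin 4) :
    principalPart (θ + θ') (η + η') t z = principalPart θ η t z + principalPart θ' η' t z := by
  fin_cases t <;>
  simp [principalPart, pdx_eq_dirDeriv, pdu_eq_dirDeriv, dirDeriv_dirDeriv_add hθ hθ',
    dirDeriv_dirDeriv_add hη hη', mul_add, add_sub_add_comm]

theorem principalPart_smul (a : ℂ) (θ η : ℂ × ℂ → ℂ) (t : Fin 4) :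
    principalPart (a • θ) (a • η) t = a • principalPart θ η t := by
  fin_cases t <;>
  simp [principalPart, pdx_eq_dirDeriv, pdu_eq_dirDeriv, dirDeriv_const_smul, smul_sub,
    smul_comm a (2 : ℂ)]

theorem closedJet_add (hθ : AnalyticAt ℂ θ z) (hη : AnalyticAt ℂ η z)
    (hθ' : AnalyticAt ℂ θ' z) (hη' : AnalyticAt ℂ η' z) (i : Fin 8) :
    closedJet (θ + θ') (η + η') i z = closedJet θ η i z + closedJet θ' η' i z := by
  have hfirst := firstJet_add hθ.differentiableAt hη.differentiableAt hθ'.differentiableAt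
    hη'.differentiableAt
  fin_cases i
  exacts [hfirst 0, hfirst 1, hfirst 2, hfirst 3, hfirst 4, hfirst 5,
    dirDeriv_dirDeriv_add hη hη' _ _, dirDeriv_dirDeriv_add hθ hθ' _ _]

theorem closedJet_smul (a : ℂ) (θ η : ℂ × ℂ → ℂ) (i : Fin 8) :
    closedJet (a • θ) (a • η) i = a • closedJet θ η i := by
  fin_cases i <;> simp [closedJet, pdx_eq_dirDeriv, pdu_eq_dirDeriv, dirDeriv_const_smul]

end Linearity

/-! ### Prolongation of the system -/

section Prolongation

variable {θ η : ℂ × ℂ → ℂ} {z : ℂ × ℂ}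

theorem analyticAt_firstJet (hθ : AnalyticAt ℂ θ z) (hη : AnalyticAt ℂ η z) (ν : Fin 6) :
    AnalyticAt ℂ (firstJet θ η ν) z := by
  fin_cases ν
  exacts [hθ, hη, analyticAt_dirDeriv hθ _, analyticAt_dirDeriv hθ _, analyticAt_dirDeriv hη _,
    analyticAt_dirDeriv hη _]

theorem analyticAt_closedJet (hθ : AnalyticAt ℂ θ z) (hη : AnalyticAt ℂ η z) (i : Fin 8) :
    AnalyticAt ℂ (closedJet θ η i) z := by
  have hfirst := analyticAt_firstJet hθ hη
  fin_cases i
  exacts [hfirst 0, hfirst 1, hfirst 2, hfirst 3, hfirst 4, hfirst 5,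
    analyticAt_dirDeriv (hfirst 4) _, analyticAt_dirDeriv (hfirst 2) _]

theorem pdu_principalPart_zero (hη : AnalyticAt ℂ η z) :
    pdu (principalPart θ η 0) z = pdx (pdu (pdx η)) z :=
  dirDeriv_comm (analyticAt_dirDeriv hη _) _ _

theorem pdx_principalPart_three (hθ : AnalyticAt ℂ θ z) :
    pdx (principalPart θ η 3) z = pdu (pdu (pdx θ)) z :=
  dirDeriv_comm_dirDeriv hθ _ _ _

theorem pdu_principalPart_one (hθ : AnalyticAt ℂ θ z) (hη : AnalyticAt ℂ η z) :
    pdu (principalPart θ η 1) z = 2 * pdu (pdu (pdx η)) z - pdx (pdu (pdx θ)) z := by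
  have hηxu := analyticAt_dirDeriv (analyticAt_dirDeriv hη (1, 0)) (0, 1)
  have hθxx := analyticAt_dirDeriv (analyticAt_dirDeriv hθ (1, 0)) (1, 0)
  calc pdu (principalPart θ η 1) z
      = pdu ((2 : ℂ) • pdu (pdx η)) z - pdu (pdx (pdx θ)) z :=
        dirDeriv_sub (hηxu.differentiableAt.const_smul _) hθxx.differentiableAt _
    _ = 2 * pdu (pdu (pdx η)) z - pdx (pdu (pdx θ)) z :=
        congrArg₂ (· - ·) (congrFun (dirDeriv_const_smul _ _ _) z)
          (dirDeriv_comm (analyticAt_dirDeriv hθ _) _ _)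

theorem pdx_principalPart_two (hθ : AnalyticAt ℂ θ z) (hη : AnalyticAt ℂ η z) :
    pdx (principalPart θ η 2) z = pdu (pdu (pdx η)) z - 2 * pdx (pdu (pdx θ)) z := by
  have hηuu := analyticAt_dirDeriv (analyticAt_dirDeriv hη (0, 1)) (0, 1)
  have hθxu := analyticAt_dirDeriv (analyticAt_dirDeriv hθ (1, 0)) (0, 1)
  calc pdx (principalPart θ η 2) z
      = pdx (pdu (pdu η)) z - pdx ((2 : ℂ) • pdu (pdx θ)) z :=
        dirDeriv_sub hηuu.differentiableAt (hθxu.differentiableAt.const_smul _) _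
    _ = pdu (pdu (pdx η)) z - 2 * pdx (pdu (pdx θ)) z :=
        congrArg₂ (· - ·) (dirDeriv_comm_dirDeriv hη _ _ _) (congrFun (dirDeriv_const_smul _ _ _) z)

variable {G : Type*} [NormedAddCommGroup G] {z₀ : ℂ × ℂ} {Y : ℂ × ℂ → G}

theorem isBigO_linExpr {c : Fin 6 → ℂ × ℂ → ℂ} (hc : ∀ ν, ContinuousAt (c ν) z₀)
    (hJ : ∀ ν, firstJet θ η ν =O[𝓝 z₀] Y) : linExpr c θ η =O[𝓝 z₀] Y := by
  rw [linExpr_eq_sum]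
  exact IsBigO.sum fun ν _ => isBigO_smul_of_continuousAt (hc ν) (hJ ν)

theorem isBigO_fderiv_linExpr {c : Fin 6 → ℂ × ℂ → ℂ} (hc : ∀ ν, AnalyticAt ℂ (c ν) z₀)
    (hθ : AnalyticAt ℂ θ z₀) (hη : AnalyticAt ℂ η z₀) (hJ : ∀ ν, firstJet θ η ν =O[𝓝 z₀] Y)
    (hJ' : ∀ ν, fderiv ℂ (firstJet θ η ν) =O[𝓝 z₀] Y) :
    fderiv ℂ (linExpr c θ η) =O[𝓝 z₀] Y := by
  have hJan := analyticAt_firstJet hθ hη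
  rw [linExpr_eq_sum]
  exact isBigO_fderiv_sum
    (fun ν _ => ((hc ν).smul (hJan ν)).eventually_analyticAt.mono fun _ h => h.differentiableAt)
    fun ν _ => isBigO_fderiv_smul (hc ν)
      ((hJan ν).eventually_analyticAt.mono fun _ h => h.differentiableAt) (hJ ν) (hJ' ν)

theorem isBigO_fderiv_firstJet (hθ : AnalyticAt ℂ θ z₀) (hη : AnalyticAt ℂ η z₀)
    (hJ : ∀ i, closedJet θ η i =O[𝓝 z₀] Y) (hP : ∀ t, principalPart θ η t =O[𝓝 z₀] Y)
    (ν : Fin 6) : fderiv ℂ (firstJet θ η ν) =O[𝓝 z₀] Y := by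
  have hηxu : pdu (pdx η) =O[𝓝 z₀] Y := hJ 6
  have hθxu : pdu (pdx θ) =O[𝓝 z₀] Y := hJ 7
  have hηux : pdx (pdu η) =O[𝓝 z₀] Y := hηxu.congr' (dirDeriv_comm_eventuallyEq hη _ _) .rfl
  have hθux : pdx (pdu θ) =O[𝓝 z₀] Y := hθxu.congr' (dirDeriv_comm_eventuallyEq hθ _ _) .rfl
  have hθxx : pdx (pdx θ) =O[𝓝 z₀] Y :=
    ((hηxu.const_smul_left (2 : ℂ)).sub (hP 1)).congr_left fun _ => sub_sub_cancel _ _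
  have hηuu : pdu (pdu η) =O[𝓝 z₀] Y :=
    ((hP 2).add (hθxu.const_smul_left (2 : ℂ))).congr_left fun _ => sub_add_cancel _ _
  rw [isBigO_fderiv_iff]
  fin_cases ν
  exacts [⟨hJ 2, hJ 3⟩, ⟨hJ 4, hJ 5⟩, ⟨hθxx, hθxu⟩, ⟨hθux, hP 3⟩, ⟨hP 0, hηxu⟩, ⟨hηux, hηuu⟩]

theorem isBigO_fderiv_closedJet (hθ : AnalyticAt ℂ θ z₀) (hη : AnalyticAt ℂ η z₀)
    (hJ' : ∀ ν, fderiv ℂ (firstJet θ η ν) =O[𝓝 z₀] Y)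
    (hP' : ∀ t, fderiv ℂ (principalPart θ η t) =O[𝓝 z₀] Y)
    (i : Fin 8) : fderiv ℂ (closedJet θ η i) =O[𝓝 z₀] Y := by
  have hPx t : pdx (principalPart θ η t) =O[𝓝 z₀] Y := (isBigO_fderiv_iff.1 (hP' t)).1
  have hPu t : pdu (principalPart θ η t) =O[𝓝 z₀] Y := (isBigO_fderiv_iff.1 (hP' t)).2
  have hana := hθ.eventually_analyticAt.and hη.eventually_analyticAt
  have hηxux : pdx (pdu (pdx η)) =O[𝓝 z₀] Y :=
    (hPu 0).congr' (hana.mono fun _ h => pdu_principalPart_zero h.2) .rfl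
  have hθxuu : pdu (pdu (pdx θ)) =O[𝓝 z₀] Y :=
    (hPx 3).congr' (hana.mono fun _ h => pdx_principalPart_three h.1) .rfl
  have hηxuu : pdu (pdu (pdx η)) =O[𝓝 z₀] Y := by
    refine ((((hPu 1).const_mul_left 2).sub (hPx 2)).const_mul_left (1 / 3)).congr'
      (hana.mono fun z h => ?_) .rfl
    dsimp only
    rw [pdu_principalPart_one h.1 h.2, pdx_principalPart_two h.1 h.2]
    ring
  have hθxux : pdx (pdu (pdx θ)) =O[𝓝 z₀] Y := by
    refine (((hPu 1).sub ((hPx 2).const_mul_left 2)).const_mul_left (1 / 3)).congr'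
      (hana.mono fun z h => ?_) .rfl
    dsimp only
    rw [pdu_principalPart_one h.1 h.2, pdx_principalPart_two h.1 h.2]
    ring
  fin_cases i
  exacts [hJ' 0, hJ' 1, hJ' 2, hJ' 3, hJ' 4, hJ' 5, isBigO_fderiv_iff.2 ⟨hηxux, hηxuu⟩,
    isBigO_fderiv_iff.2 ⟨hθxux, hθxuu⟩]

theorem isBigO_fderiv_closedJet_self {c : Fin 4 → Fin 6 → ℂ × ℂ → ℂ}
    (hc : ∀ t ν, AnalyticAt ℂ (c t ν) z₀) (hθ : AnalyticAt ℂ θ z₀) (hη : AnalyticAt ℂ η z₀)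
    (hsys : ∀ t, principalPart θ η t =ᶠ[𝓝 z₀] linExpr (c t) θ η) :
    fderiv ℂ (fun z i => closedJet θ η i z) =O[𝓝 z₀] fun z i => closedJet θ η i z := by
  set Y : ℂ × ℂ → Fin 8 → ℂ := fun z i => closedJet θ η i z
  have hY : ∀ i, closedJet θ η i =O[𝓝 z₀] Y := isBigO_pi.1 (isBigO_refl Y _)
  have hJ (ν : Fin 6) : firstJet θ η ν =O[𝓝 z₀] Y := by
    fin_cases ν
    exacts [hY 0, hY 1, hY 2, hY 3, hY 4, hY 5]
  have hP (t : Fin 4) : principalPart θ η t =O[𝓝 z₀] Y :=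
    (isBigO_linExpr (fun ν => (hc t ν).continuousAt) hJ).congr' (hsys t).symm .rfl
  have hJ' := isBigO_fderiv_firstJet hθ hη hY hP
  have hP' (t : Fin 4) : fderiv ℂ (principalPart θ η t) =O[𝓝 z₀] Y :=
    (isBigO_fderiv_linExpr (hc t) hθ hη hJ hJ').congr' (hsys t).symm.fderiv .rfl
  exact isBigO_fderiv_pi
    (fun i => (analyticAt_closedJet hθ hη i).eventually_analyticAt.mono
      fun _ h => h.differentiableAt)
    (isBigO_fderiv_closedJet hθ hη hJ' hP')

theorem eventually_closedJet_eq_zero {c : Fin 4 → Fin 6 → ℂ × ℂ → ℂ}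
    (hc : ∀ t ν, AnalyticAt ℂ (c t ν) z₀) (hθ : AnalyticAt ℂ θ z₀) (hη : AnalyticAt ℂ η z₀)
    (hsys : ∀ t, principalPart θ η t =ᶠ[𝓝 z₀] linExpr (c t) θ η)
    (h₀ : ∀ i, closedJet θ η i z₀ = 0) (i : Fin 8) : closedJet θ η i =ᶠ[𝓝 z₀] 0 := by
  have hdiff : ∀ᶠ z in 𝓝 z₀, DifferentiableAt ℂ (fun z i => closedJet θ η i z) z :=
    (AnalyticAt.pi (analyticAt_closedJet hθ hη)).eventually_analyticAt.mono
      fun _ h => h.differentiableAt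
  exact (eventuallyEq_zero_of_isBigO_fderiv hdiff (isBigO_fderiv_closedJet_self hc hθ hη hsys)
    (funext h₀)).mono fun _ h => congrFun h i

end Prolongation

/-! ### The solution space -/

/-- The pairs of functions on `ℂ²` that are analytic on `U` and satisfy the system there. They are
unconstrained outside `U`. -/
def solutionSpace (U : Set (ℂ × ℂ)) (c : Fin 4 → Fin 6 → ℂ × ℂ → ℂ) :
    Submodule ℂ ((ℂ × ℂ → ℂ) × (ℂ × ℂ → ℂ)) where
  carrier := {p | AnalyticOnNhd ℂ p.1 U ∧ AnalyticOnNhd ℂ p.2 U ∧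
    ∀ t, ∀ z ∈ U, principalPart p.1 p.2 t z = linExpr (c t) p.1 p.2 z}
  add_mem' := by
    rintro ⟨θ, η⟩ ⟨θ', η'⟩ ⟨hθ, hη, h⟩ ⟨hθ', hη', h'⟩
    refine ⟨hθ.add hθ', hη.add hη', fun t z hz => ?_⟩
    exact (principalPart_add (hθ z hz) (hη z hz) (hθ' z hz) (hη' z hz) t).trans <|
      (congrArg₂ (· + ·) (h t z hz) (h' t z hz)).trans
        (linExpr_add (c t) (hθ z hz).differentiableAt (hη z hz).differentiableAt
          (hθ' z hz).differentiableAt (hη' z hz).differentiableAt).symm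
  zero_mem' := by
    refine ⟨analyticOnNhd_const, analyticOnNhd_const, fun t z _ => ?_⟩
    have hP := principalPart_smul 0 0 0 t
    have hL := linExpr_smul (c t) 0 0 0
    simp only [zero_smul] at hP hL
    exact (congrFun hP z).trans (congrFun hL z).symm
  smul_mem' := by
    rintro a ⟨θ, η⟩ ⟨hθ, hη, h⟩
    refine ⟨hθ.const_smul, hη.const_smul, fun t z hz => ?_⟩
    exact (congrFun (principalPart_smul a θ η t) z).trans <|
      (congrArg (a • ·) (h t z hz)).trans (congrFun (linExpr_smul (c t) a θ η) z).symm

/-- The value at `z₀` of the closed jet of a solution. -/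
noncomputable def closedJetAt {U : Set (ℂ × ℂ)} (c : Fin 4 → Fin 6 → ℂ × ℂ → ℂ) {z₀ : ℂ × ℂ}
    (hz₀ : z₀ ∈ U) : solutionSpace U c →ₗ[ℂ] (Fin 8 → ℂ) where
  toFun p i := closedJet p.1.1 p.1.2 i z₀
  map_add' p q := funext <|
    closedJet_add (p.2.1 z₀ hz₀) (p.2.2.1 z₀ hz₀) (q.2.1 z₀ hz₀) (q.2.2.1 z₀ hz₀)
  map_smul' a p := funext fun i => congrFun (closedJet_smul a p.1.1 p.1.2 i) z₀

/-- Restriction to `U` of pairs of functions on `ℂ²`. -/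
def restrictPair (U : Set (ℂ × ℂ)) :
    (ℂ × ℂ → ℂ) × (ℂ × ℂ → ℂ) →ₗ[ℂ] (U → ℂ) × (U → ℂ) :=
  (LinearMap.funLeft ℂ ℂ Subtype.val).prodMap (LinearMap.funLeft ℂ ℂ Subtype.val)

theorem span_restrictPair_image (U : Set (ℂ × ℂ)) (c : Fin 4 → Fin 6 → ℂ × ℂ → ℂ) :
    Submodule.span ℂ (restrictPair U ''
      {p | AnalyticOnNhd ℂ p.1 U ∧ AnalyticOnNhd ℂ p.2 U ∧
        (∀ z ∈ U, pdx (pdx p.2) z = linExpr (c 0) p.1 p.2 z) ∧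
        (∀ z ∈ U, 2 * pdu (pdx p.2) z - pdx (pdx p.1) z = linExpr (c 1) p.1 p.2 z) ∧
        (∀ z ∈ U, pdu (pdu p.2) z - 2 * pdu (pdx p.1) z = linExpr (c 2) p.1 p.2 z) ∧
        (∀ z ∈ U, pdu (pdu p.1) z = linExpr (c 3) p.1 p.2 z)}) =
      (solutionSpace U c).map (restrictPair U) := by
  rw [Submodule.span_image, ← Submodule.span_eq (solutionSpace U c)]
  congr 2
  ext p
  refine and_congr_right' (and_congr_right' (Iff.symm ?_))
  exact Fin.forall_fin_succ.trans (and_congr_right' (Fin.forall_fin_succ.trans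
    (and_congr_right' Fin.forall_fin_two)))

theorem rank_range_le_of_ker_le.{u} {R M : Type*} {N P : Type u} [Ring R]
    [AddCommGroup M] [Module R M] [AddCommGroup N] [Module R N] [AddCommGroup P] [Module R P]
    {f : M →ₗ[R] N} {g : M →ₗ[R] P} (h : LinearMap.ker f ≤ LinearMap.ker g) :
    Module.rank R (LinearMap.range g) ≤ Module.rank R (LinearMap.range f) := by
  let k : LinearMap.range f →ₗ[R] P := (LinearMap.ker f).liftQ g h ∘ₗ f.quotKerEquivRange.symm
  have hk : LinearMap.range k = LinearMap.range g := by
    rw [LinearMap.range_comp_of_range_eq_top _ (LinearEquiv.range _), Submodule.range_liftQ]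
  exact hk ▸ rank_range_le k

theorem ker_closedJetAt_le {U : Set (ℂ × ℂ)} (hU : IsPreconnected U) {z₀ : ℂ × ℂ}
    (hz₀ : U ∈ 𝓝 z₀) {c : Fin 4 → Fin 6 → ℂ × ℂ → ℂ} (hc : ∀ t ν, AnalyticAt ℂ (c t ν) z₀) :
    LinearMap.ker (closedJetAt c (mem_of_mem_nhds hz₀)) ≤
      LinearMap.ker ((restrictPair U).domRestrict (solutionSpace U c)) := by
  rintro ⟨⟨θ, η⟩, hθ, hη, hsys⟩ hker
  have hz₀U := mem_of_mem_nhds hz₀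
  have hlocal := eventually_closedJet_eq_zero hc (hθ z₀ hz₀U) (hη z₀ hz₀U)
    (fun t => eventually_of_mem hz₀ (hsys t)) (congrFun (LinearMap.mem_ker.1 hker))
  have hθ₀ := hθ.eqOn_zero_of_preconnected_of_eventuallyEq_zero hU hz₀U (hlocal 0)
  have hη₀ := hη.eqOn_zero_of_preconnected_of_eventuallyEq_zero hU hz₀U (hlocal 1)
  exact LinearMap.mem_ker.2
    (Prod.ext (funext fun z => hθ₀ z.2) (funext fun z => hη₀ z.2))

theorem perturbed_flat_ODE_symmetry_dim_le_eight_general {U : Set (ℂ × ℂ)}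
    (hU : IsPreconnected U) {z₀ : ℂ × ℂ} (hz₀ : U ∈ 𝓝 z₀) {c : Fin 4 → Fin 6 → ℂ × ℂ → ℂ}
    (hc : ∀ t ν, AnalyticAt ℂ (c t ν) z₀) :
    Module.rank ℂ ((solutionSpace U c).map (restrictPair U)) ≤ 8 := by
  rw [← LinearMap.range_domRestrict]
  calc Module.rank ℂ (LinearMap.range ((restrictPair U).domRestrict (solutionSpace U c)))
      ≤ Module.rank ℂ (LinearMap.range (closedJetAt c (mem_of_mem_nhds hz₀))) :=
        rank_range_le_of_ker_le (ker_closedJetAt_le hU hz₀ hc)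
    _ ≤ Module.rank ℂ (Fin 8 → ℂ) := Submodule.rank_le _
    _ = 8 := by simp

/-- Let `U ⊆ ℂ²` be a connected open set with coordinates `(x,u)`, and for
`t = 1,2,3,4` let `L_t(θ,η)` be first-order linear expressions in `(θ,η)` with analytic
coefficients on `U`.  Then the `ℂ`-vector space of pairs `(θ,η)` of analytic functions
on `U` satisfying the system `η_{xx} = L₁(θ,η)`, `2η_{xu} − θ_{xx} = L₂(θ,η)`,
`η_{uu} − 2θ_{xu} = L₃(θ,η)`, `θ_{uu} = L₄(θ,η)` on `U` has dimension at most `8`.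
(This covers the Lie equations of any holomorphic second order ODE `u_{xx} = F(x,u,u_x)`,
whose symmetry algebra therefore has dimension at most `8`.) -/
theorem perturbed_flat_ODE_symmetry_dim_le_eight
    (U : Set (ℂ × ℂ)) (hUopen : IsOpen U) (hUconn : IsConnected U)
    (c : Fin 4 → Fin 6 → (ℂ × ℂ → ℂ))
    (hc : ∀ t ν, AnalyticOnNhd ℂ (c t ν) U) :
    Module.rank ℂ
      ↥(Submodule.span ℂ
        ((fun p : (ℂ × ℂ → ℂ) × (ℂ × ℂ → ℂ) => (U.restrict p.1, U.restrict p.2)) ''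
          {p : (ℂ × ℂ → ℂ) × (ℂ × ℂ → ℂ) |
            AnalyticOnNhd ℂ p.1 U ∧ AnalyticOnNhd ℂ p.2 U ∧
            (∀ z ∈ U, pdx (pdx p.2) z = linExpr (c 0) p.1 p.2 z) ∧
            (∀ z ∈ U, 2 * pdu (pdx p.2) z - pdx (pdx p.1) z = linExpr (c 1) p.1 p.2 z) ∧
            (∀ z ∈ U, pdu (pdu p.2) z - 2 * pdu (pdx p.1) z = linExpr (c 2) p.1 p.2 z) ∧
            (∀ z ∈ U, pdu (pdu p.1) z = linExpr (c 3) p.1 p.2 z)}))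
      ≤ 8 := by
  obtain ⟨z₀, hz₀⟩ := hUconn.nonempty
  exact (LinearEquiv.ofEq _ _ (span_restrictPair_image U c)).rank_eq.trans_le
    (perturbed_flat_ODE_symmetry_dim_le_eight_general hUconn.isPreconnected
      (hUopen.mem_nhds hz₀) fun t ν => hc t ν z₀ hz₀)
end
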